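/- arXiv:2109.07649 — 4 statements merged into one kernel-verified Lean document; each statement's English description precedes it below -/
import Mathlib

section
/- For $\mathrm{Re}(s) > 0$ and even integer $k$, and for real $t \neq 0$, $\int_{\mathbb{R}} (b^2+1)^{-(s+1/2)} \Big(\frac{b-i}{\sqrt{b^2+1}}\Big)^k e^{i t b}\, db = \frac{(-1)^{k/2}\pi^{s+1/2}\,(|t|/(2\pi))^{s-1/2}}{\Gamma(s+1/2 - \mathrm{sgn}(t)k/2)}\, W_{-\mathrm{sgn}(t)k/2,\,-s}(2|t|)$. -/
open Complex MeasureTheory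

/-!
With `A = s + 1/2 - k/2` and `B = s + 1/2 + k/2`, the integrand is
`(-i)^k (1 + ib)^{-A} (1 - ib)^{-B} e^{itb}`. Write `(1 - ib)^{-B}` as a Gamma integral
`Γ(B)⁻¹ ∫ v^{B-1} e^{-v} e^{ivb} dv` and exchange the integrals: for `Re A > 1` and `t > 0`, Fourier
inversion of the density `x^{A-1} e^{-x}` evaluates the integral over `b`, and what remains is
Laplace's integral for Tricomi's function, that is for `W_{-k/2, s}`, which equals `W_{-k/2, -s}` by
Kummer's transformation. Both sides are holomorphic on `Re s > 0`, so the identity theorem removes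
the restriction on `A`; the reflection `b ↦ -b` gives `t < 0`. The entire continuation of `W` is
obtained from Laplace's integral by repeated integration by parts.
-/

open Filter Set
open scoped FourierTransform Real Topology

section ParametricIntegral

variable {α β 𝕜 E : Type*} [MeasurableSpace α] {μ : Measure α} [MeasurableSpace β] {ν : Measure β}
  [NormedAddCommGroup E]

lemma aestronglyMeasurable_of_hasDerivAt [NontriviallyNormedField 𝕜] [NormedSpace 𝕜 E]
    {F : 𝕜 → α → E} {F' : α → E} {w₀ : 𝕜} (hF : ∀ᶠ w in 𝓝 w₀, AEStronglyMeasurable (F w) μ)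
    (hF' : ∀ᵐ a ∂μ, HasDerivAt (F · a) (F' a) w₀) : AEStronglyMeasurable F' μ := by
  obtain ⟨w, hw_tendsto, hw_meas⟩ :=
    exists_seq_forall_of_frequently
      (hF.filter_mono nhdsWithin_le_nhds : ∀ᶠ w in 𝓝[≠] w₀, _).frequently
  refine aestronglyMeasurable_of_tendsto_ae atTop
    (fun n => ((hw_meas n).sub hF.self_of_nhds).const_smul (w n - w₀)⁻¹) ?_
  filter_upwards [hF'] with a ha
  exact (hasDerivAt_iff_tendsto_slope.1 ha).comp hw_tendsto

/- Cauchy's estimate turns the bound on `F` into a bound on its derivative. -/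
lemma differentiableAt_integral_of_dominated [NormedSpace ℂ E] {F : ℂ → α → E}
    {bound : α → ℝ} {w₀ : ℂ} {U : Set ℂ} (hU : U ∈ 𝓝 w₀)
    (hF_meas : ∀ w ∈ U, AEStronglyMeasurable (F w) μ)
    (h_bound : ∀ᵐ a ∂μ, ∀ w ∈ U, ‖F w a‖ ≤ bound a) (bound_integrable : Integrable bound μ)
    (h_diff : ∀ᵐ a ∂μ, DifferentiableOn ℂ (F · a) U) :
    DifferentiableAt ℂ (fun w => ∫ a, F w a ∂μ) w₀ := by
  obtain ⟨R, hR, hball⟩ := Metric.mem_nhds_iff.1 hU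
  have hasDerivAt {a : α} (ha : DifferentiableOn ℂ (F · a) U) {w : ℂ} (hw : w ∈ Metric.ball w₀ R) :
      HasDerivAt (F · a) (deriv (F · a) w) w :=
    (ha.differentiableAt (mem_of_superset (Metric.isOpen_ball.mem_nhds hw) hball)).hasDerivAt
  refine (hasDerivAt_integral_of_dominated_loc_of_deriv_le (F' := fun w a => deriv (F · a) w)
    (bound := fun a => bound a / (R / 2)) (Metric.ball_mem_nhds w₀ (half_pos hR)) ?_ ?_ ?_ ?_
    (bound_integrable.div_const _) ?_).2.differentiableAt
  · filter_upwards [hU] with w hw using hF_meas w hw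
  · exact bound_integrable.mono' (hF_meas _ (mem_of_mem_nhds hU))
      (h_bound.mono fun a ha => ha _ (mem_of_mem_nhds hU))
  · exact aestronglyMeasurable_of_hasDerivAt (by filter_upwards [hU] with w hw using hF_meas w hw)
      (h_diff.mono fun a ha => hasDerivAt ha (Metric.mem_ball_self hR))
  · filter_upwards [h_bound, h_diff] with a ha_bound ha_diff w hw
    have hsub : Metric.closedBall w (R / 2) ⊆ U :=
      (Metric.closedBall_subset_ball' (by linarith [Metric.mem_ball.1 hw])).trans hball
    refine norm_deriv_le_of_forall_mem_sphere_norm_le (half_pos hR) ?_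
      fun z hz => ha_bound z (hsub (Metric.sphere_subset_closedBall hz))
    refine DifferentiableOn.diffContOnCl ?_
    rw [closure_ball _ (half_pos hR).ne']
    exact ha_diff.mono hsub
  · filter_upwards [h_diff] with a ha w hw
    exact hasDerivAt ha (Metric.ball_subset_ball (half_le_self hR.le) hw)

lemma integral_integral_swap_of_norm_le [SFinite μ] [SFinite ν] {f : α → ℂ} {g : β → ℂ}
    {k : α × β → ℂ} {C : ℝ} (hf : Integrable f μ) (hg : Integrable g ν)
    (hk : AEStronglyMeasurable k (μ.prod ν)) (hC : ∀ᵐ p ∂μ.prod ν, ‖k p‖ ≤ C) :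
    ∫ x, ∫ y, f x * g y * k (x, y) ∂ν ∂μ = ∫ y, ∫ x, f x * g y * k (x, y) ∂μ ∂ν :=
  integral_integral_swap (f := fun x y => f x * g y * k (x, y)) ((hf.mul_prod hg).mul_bdd hk hC)

end ParametricIntegral

section GammaIntegral

lemma continuousOn_ofReal_cpow_const (a : ℂ) : ContinuousOn (fun t : ℝ => (t : ℂ) ^ a) (Ioi 0) :=
  fun t ht => (continuousAt_ofReal_cpow_const t a (.inr (ne_of_gt ht))).continuousWithinAt

lemma integrableOn_rpow_mul_exp_neg_mul {p r : ℝ} (hp : -1 < p) (hr : 0 < r) :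
    IntegrableOn (fun t : ℝ => t ^ p * Real.exp (-r * t)) (Ioi 0) := by
  simpa only [Real.rpow_one] using integrableOn_rpow_mul_exp_neg_mul_rpow hp one_pos hr

lemma integrableOn_cpow_mul_exp_neg {a : ℂ} (ha : 0 < a.re) :
    IntegrableOn (fun t : ℝ => (t : ℂ) ^ (a - 1) * cexp (-t)) (Ioi 0) := by
  simpa only [ofReal_exp, ofReal_neg, mul_comm] using GammaIntegral_convergent ha

lemma differentiableOn_integral_cpow_mul_exp_neg_mul {a : ℂ} (ha : 0 < a.re) :
    DifferentiableOn ℂ (fun r => ∫ t : ℝ in Ioi 0, (t : ℂ) ^ (a - 1) * cexp (-(r * t)))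
      {r | 0 < r.re} := by
  intro r₀ (hr₀ : 0 < r₀.re)
  have hU : {r : ℂ | r₀.re / 2 < r.re} ∈ 𝓝 r₀ :=
    (isOpen_lt continuous_const continuous_re).mem_nhds (half_lt_self hr₀)
  refine (differentiableAt_integral_of_dominated
    (bound := fun t => t ^ (a.re - 1) * Real.exp (-(r₀.re / 2) * t)) hU (fun r _ => ?_) ?_
    (integrableOn_rpow_mul_exp_neg_mul (by linarith) (half_pos hr₀))
    (.of_forall fun t => by fun_prop)).differentiableWithinAt
  · exact ((continuousOn_ofReal_cpow_const _).mul (by fun_prop)).aestronglyMeasurable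
      measurableSet_Ioi
  · filter_upwards [ae_restrict_mem measurableSet_Ioi] with t (ht : 0 < t) r (hr : r₀.re / 2 < r.re)
    rw [norm_mul, norm_cpow_eq_rpow_re_of_pos ht, norm_exp, sub_re, one_re, neg_re, re_mul_ofReal,
      neg_mul]
    gcongr

lemma integral_cpow_mul_exp_neg_mul_of_re_pos {a r : ℂ} (ha : 0 < a.re) (hr : 0 < r.re) :
    ∫ t : ℝ in Ioi 0, (t : ℂ) ^ (a - 1) * cexp (-(r * t)) = r ^ (-a) * Gamma a := by
  have hopen : IsOpen {r : ℂ | 0 < r.re} := isOpen_lt continuous_const continuous_re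
  have hdiff : DifferentiableOn ℂ (fun r : ℂ => r ^ (-a) * Gamma a) {r | 0 < r.re} := fun r hr =>
    ((differentiableAt_id.cpow_const (.inl hr)).mul_const _).differentiableWithinAt
  have hreal : Tendsto (fun x : ℝ => (x : ℂ)) (𝓝[≠] 1) (𝓝[≠] 1) :=
    tendsto_nhdsWithin_iff.2 ⟨(continuous_ofReal.tendsto' 1 1 ofReal_one).mono_left
      nhdsWithin_le_nhds, eventually_nhdsWithin_of_forall fun x hx => by simpa using hx⟩
  refine ((differentiableOn_integral_cpow_mul_exp_neg_mul ha).analyticOnNhd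
    hopen).eqOn_of_preconnected_of_frequently_eq (hdiff.analyticOnNhd hopen)
    (convex_halfSpace_re_gt 0).isPreconnected (z₀ := 1) (by simp)
    (hreal.frequently (Eventually.frequently ?_)) hr
  filter_upwards [nhdsWithin_le_nhds (lt_mem_nhds one_pos)] with x hx
  rw [integral_cpow_mul_exp_neg_mul_Ioi ha hx, one_div, cpow_neg, inv_cpow]
  rw [arg_ofReal_of_nonneg hx.le]
  exact Real.pi_pos.ne

end GammaIntegral

section Tricomi

variable {z : ℝ}

lemma exists_one_add_div_rpow_le (hz : 0 < z) (p : ℝ) :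
    ∃ C > 0, ∀ q ≤ p, ∀ t > 0, (1 + t / z) ^ q ≤ C * Real.exp (t / 2) := by
  obtain ⟨P, hP, hpP⟩ : ∃ P > 0, p ≤ P := ⟨max p 1, by positivity, le_max_left _ _⟩
  refine ⟨(1 + 2 * P / z) ^ P, by positivity, fun q hq t (ht : 0 < t) => ?_⟩
  have hone : 1 ≤ 1 + t / z := le_add_of_nonneg_right (by positivity)
  have hexp : 1 + t / z ≤ (1 + 2 * P / z) * Real.exp (t / (2 * P)) := by
    calc 1 + t / z = 1 + 2 * P / z * (t / (2 * P)) := by field_simp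
      _ ≤ (1 + 2 * P / z) * (t / (2 * P) + 1) := by
        linarith [show 0 < 2 * P / z by positivity, show 0 < t / (2 * P) by positivity]
      _ ≤ _ := by gcongr; exact Real.add_one_le_exp _
  calc (1 + t / z) ^ q ≤ (1 + t / z) ^ P :=
        Real.rpow_le_rpow_of_exponent_le hone (hq.trans hpP)
    _ ≤ ((1 + 2 * P / z) * Real.exp (t / (2 * P))) ^ P := by gcongr
    _ = _ := by
      rw [Real.mul_rpow (by positivity) (by positivity), ← Real.exp_mul]
      congr 2
      field_simp

lemma rpow_le_rpow_add_rpow {t p q r : ℝ} (ht : 0 < t) (hpq : p ≤ q) (hqr : q ≤ r) :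
    t ^ q ≤ t ^ p + t ^ r := by
  rcases le_total t 1 with h | h
  · exact (Real.rpow_le_rpow_of_exponent_ge ht h hpq).trans
      (le_add_of_nonneg_right (by positivity))
  · exact (Real.rpow_le_rpow_of_exponent_le h hqr).trans (le_add_of_nonneg_left (by positivity))

/-- The integrand in Laplace's integral for Tricomi's function `U(a, a + c + 1, z)`, after the
substitution that turns the exponential into `exp (-t)`. -/
noncomputable def tricomiIntegrand (z : ℝ) (a c : ℂ) (t : ℝ) : ℂ :=
  (t : ℂ) ^ (a - 1) * ((1 + t / z : ℝ) : ℂ) ^ c * cexp (-t)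

lemma norm_tricomiIntegrand (hz : 0 < z) (a c : ℂ) {t : ℝ} (ht : 0 < t) :
    ‖tricomiIntegrand z a c t‖ = t ^ (a.re - 1) * (1 + t / z) ^ c.re * Real.exp (-t) := by
  rw [tricomiIntegrand, norm_mul, norm_mul, norm_cpow_eq_rpow_re_of_pos ht,
    norm_cpow_eq_rpow_re_of_pos (by positivity), norm_exp, sub_re, one_re, neg_re, ofReal_re]

lemma exists_norm_tricomiIntegrand_le (hz : 0 < z) (p : ℝ) :
    ∃ C > 0, ∀ a c : ℂ, c.re ≤ p → ∀ t > 0,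
      ‖tricomiIntegrand z a c t‖ ≤ C * (t ^ (a.re - 1) * Real.exp (-(1 / 2) * t)) := by
  obtain ⟨C, hC, hbound⟩ := exists_one_add_div_rpow_le hz p
  refine ⟨C, hC, fun a c hc t ht => ?_⟩
  calc ‖tricomiIntegrand z a c t‖ = t ^ (a.re - 1) * (1 + t / z) ^ c.re * Real.exp (-t) :=
        norm_tricomiIntegrand hz a c ht
    _ ≤ t ^ (a.re - 1) * (C * Real.exp (t / 2)) * Real.exp (-t) := by
      have := (show (0 : ℝ) < t from ht)
      gcongr
      exact hbound _ hc _ ht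
    _ = C * (t ^ (a.re - 1) * (Real.exp (t / 2) * Real.exp (-t))) := by ring
    _ = _ := by rw [← Real.exp_add]; ring_nf

lemma hasDerivAt_ofReal_cpow_const_of_pos {x : ℝ} (hx : 0 < x) (a : ℂ) :
    HasDerivAt (fun t : ℝ => (t : ℂ) ^ a) (a * (x : ℂ) ^ (a - 1)) x := by
  simpa only [mul_one, id] using
    ((hasDerivAt_id (x : ℂ)).cpow_const (c := a) (.inl (by simpa using hx))).comp_ofReal

lemma hasDerivAt_tricomiIntegrand_add_one (hz : 0 < z) (a c : ℂ) {t : ℝ} (ht : 0 < t) :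
    HasDerivAt (tricomiIntegrand z (a + 1) c)
      (a * tricomiIntegrand z a c t + c / z * tricomiIntegrand z (a + 1) (c - 1) t -
        tricomiIntegrand z (a + 1) c t) t := by
  have hpow := hasDerivAt_ofReal_cpow_const_of_pos ht (a + 1 - 1)
  have hone := (hasDerivAt_ofReal_cpow_const_of_pos (x := 1 + t / z) (by positivity) c).scomp t
    (((hasDerivAt_id t).div_const z).const_add 1)
  have hexp := (hasDerivAt_neg (t : ℂ)).cexp.comp_ofReal
  refine ((hpow.mul hone).mul hexp).congr_deriv ?_
  simp only [tricomiIntegrand, add_sub_cancel_right, Function.comp_apply, id, real_smul,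
    Pi.mul_apply]
  push_cast
  ring

lemma continuousOn_tricomiIntegrand (hz : 0 < z) (a c : ℂ) :
    ContinuousOn (tricomiIntegrand z a c) (Ioi 0) := fun t (ht : 0 < t) => by
  simpa only [sub_add_cancel] using
    (hasDerivAt_tricomiIntegrand_add_one hz (a - 1) c ht).continuousAt.continuousWithinAt

lemma integrableOn_tricomiIntegrand (hz : 0 < z) {a : ℂ} (c : ℂ) (ha : 0 < a.re) :
    IntegrableOn (tricomiIntegrand z a c) (Ioi 0) := by
  obtain ⟨C, -, hC⟩ := exists_norm_tricomiIntegrand_le hz c.re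
  exact Integrable.mono' ((integrableOn_rpow_mul_exp_neg_mul (p := a.re - 1) (r := 1 / 2)
    (by linarith) (by norm_num)).const_mul C)
    ((continuousOn_tricomiIntegrand hz a c).aestronglyMeasurable measurableSet_Ioi)
    ((ae_restrict_mem measurableSet_Ioi).mono fun t ht => hC a c le_rfl t ht)

lemma differentiableAt_integral_tricomiIntegrand (hz : 0 < z) {a c : ℂ → ℂ}
    (ha : Differentiable ℂ a) (hc : Differentiable ℂ c) {w₀ : ℂ} (hw₀ : 0 < (a w₀).re) :
    DifferentiableAt ℂ (fun w => ∫ t in Ioi 0, tricomiIntegrand z (a w) (c w) t) w₀ := by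
  obtain ⟨C, hC, hbound⟩ := exists_norm_tricomiIntegrand_le hz ((c w₀).re + 1)
  have ha_re : Continuous fun w => (a w).re := continuous_re.comp ha.continuous
  have hc_re : Continuous fun w => (c w).re := continuous_re.comp hc.continuous
  have hU : {w | ((a w₀).re / 2 < (a w).re ∧ (a w).re < (a w₀).re + 1) ∧
      (c w).re < (c w₀).re + 1} ∈ 𝓝 w₀ :=
    (((isOpen_lt continuous_const ha_re).inter (isOpen_lt ha_re continuous_const)).inter
      (isOpen_lt hc_re continuous_const)).mem_nhds
      ⟨⟨half_lt_self hw₀, lt_add_one (a w₀).re⟩, lt_add_one (c w₀).re⟩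
  refine differentiableAt_integral_of_dominated hU
    (bound := fun t => C * (t ^ ((a w₀).re / 2 - 1) * Real.exp (-(1 / 2) * t) +
      t ^ ((a w₀).re + 1 - 1) * Real.exp (-(1 / 2) * t))) (fun w _ => ?_) ?_ ?_ ?_
  · exact (continuousOn_tricomiIntegrand hz _ _).aestronglyMeasurable measurableSet_Ioi
  · filter_upwards [ae_restrict_mem measurableSet_Ioi] with t (ht : 0 < t) w ⟨⟨hlo, hhi⟩, hcw⟩
    refine (hbound _ _ hcw.le t ht).trans ?_
    rw [← add_mul]
    gcongr
    exact rpow_le_rpow_add_rpow ht (by linarith) (by linarith)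
  · exact ((integrableOn_rpow_mul_exp_neg_mul (by linarith) (by norm_num)).add
      (integrableOn_rpow_mul_exp_neg_mul (by linarith) (by norm_num))).const_mul C
  · filter_upwards [ae_restrict_mem measurableSet_Ioi] with t (ht : 0 < t)
    have hone : ((1 + t / z : ℝ) : ℂ) ≠ 0 := ofReal_ne_zero.2 (by positivity)
    exact ((((ha.sub_const 1).const_cpow (.inl (ofReal_ne_zero.2 ht.ne'))).mul
      (hc.const_cpow (.inl hone))).mul_const _).differentiableOn

lemma tendsto_tricomiIntegrand_atTop (hz : 0 < z) (a c : ℂ) :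
    Tendsto (tricomiIntegrand z a c) atTop (𝓝 0) := by
  obtain ⟨C, -, hC⟩ := exists_norm_tricomiIntegrand_le hz c.re
  have hlim := (tendsto_rpow_mul_exp_neg_mul_atTop_nhds_zero (a.re - 1) (1 / 2)
    (by norm_num)).const_mul C
  rw [mul_zero] at hlim
  exact squeeze_zero_norm' ((eventually_gt_atTop 0).mono fun t ht => hC a c le_rfl t ht) hlim

lemma mul_integral_tricomiIntegrand (hz : 0 < z) {a : ℂ} (c : ℂ) (ha : 0 < a.re) :
    a * ∫ t in Ioi 0, tricomiIntegrand z a c t =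
      (∫ t in Ioi 0, tricomiIntegrand z (a + 1) c t) -
        c / z * ∫ t in Ioi 0, tricomiIntegrand z (a + 1) (c - 1) t := by
  have ha_succ : 0 < (a + 1).re := by rw [add_re, one_re]; positivity
  have ha_ne : a ≠ 0 := fun h => by simp [h] at ha
  have h₁ : IntegrableOn (fun t => a * tricomiIntegrand z a c t) (Ioi 0) :=
    (integrableOn_tricomiIntegrand hz c ha).const_mul a
  have h₂ := integrableOn_tricomiIntegrand hz c ha_succ
  have h₃ : IntegrableOn (fun t => c / z * tricomiIntegrand z (a + 1) (c - 1) t) (Ioi 0) :=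
    (integrableOn_tricomiIntegrand hz (c - 1) ha_succ).const_mul (c / z)
  have h₁₃ : IntegrableOn (fun t => a * tricomiIntegrand z a c t +
      c / z * tricomiIntegrand z (a + 1) (c - 1) t) (Ioi 0) := h₁.add h₃
  have hcont : ContinuousWithinAt (tricomiIntegrand z (a + 1) c) (Ici 0) 0 := by
    refine ContinuousAt.continuousWithinAt (.mul (.mul ?_ ?_) (by fun_prop))
    · exact continuousAt_ofReal_cpow_const 0 _ (.inl (by simpa using ha))
    · exact (continuousAt_ofReal_cpow_const (1 + 0 / z) c (.inr (by simp))).comp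
        (f := fun t : ℝ => 1 + t / z) (by fun_prop)
  have hftc := integral_Ioi_of_hasDerivAt_of_tendsto hcont
    (fun t ht => hasDerivAt_tricomiIntegrand_add_one hz a c ht) (h₁₃.sub h₂)
    (tendsto_tricomiIntegrand_atTop hz (a + 1) c)
  rw [integral_sub h₁₃ h₂, integral_add h₁ h₃, integral_const_mul, integral_const_mul,
    tricomiIntegrand, add_sub_cancel_right, ofReal_zero, zero_cpow ha_ne, zero_mul, zero_mul,
    sub_zero] at hftc
  linear_combination hftc

/-- The continuation of `(Gamma a)⁻¹ * ∫ t in Ioi 0, tricomiIntegrand z a c t` to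
`0 < a.re + n`, obtained by integrating by parts `n` times. -/
noncomputable def tricomiAux (z : ℝ) : ℕ → ℂ → ℂ → ℂ
  | 0, a, c => (Gamma a)⁻¹ * ∫ t in Ioi 0, tricomiIntegrand z a c t
  | n + 1, a, c => tricomiAux z n (a + 1) c - c / z * tricomiAux z n (a + 1) (c - 1)

lemma tricomiAux_succ (hz : 0 < z) (n : ℕ) {a : ℂ} (c : ℂ) (ha : 0 < a.re + n) :
    tricomiAux z (n + 1) a c = tricomiAux z n a c := by
  induction n generalizing a c with
  | zero =>
    replace ha : 0 < a.re := by simpa using ha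
    have ha_ne : a ≠ 0 := fun h => by simp [h] at ha
    have hGamma : Gamma a ≠ 0 := Gamma_ne_zero_of_re_pos ha
    simp only [tricomiAux, Gamma_add_one _ ha_ne]
    field_simp
    linear_combination -mul_integral_tricomiIntegrand hz c ha
  | succ n ih =>
    have ha_succ : 0 < (a + 1).re + n := by
      rw [add_re, one_re, add_assoc, add_comm 1]
      exact_mod_cast ha
    rw [tricomiAux, ih c ha_succ, ih (c - 1) ha_succ, ← tricomiAux]

lemma tricomiAux_eq_of_le (hz : 0 < z) {n m : ℕ} (hnm : n ≤ m) {a : ℂ} (c : ℂ)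
    (ha : 0 < a.re + n) : tricomiAux z m a c = tricomiAux z n a c := by
  induction m, hnm using Nat.le_induction with
  | base => rfl
  | succ m hnm ih =>
    have hcast : (n : ℝ) ≤ m := mod_cast hnm
    rw [tricomiAux_succ hz m c (by linarith), ih]

lemma differentiableAt_tricomiAux (hz : 0 < z) (n : ℕ) {a c : ℂ → ℂ} (ha : Differentiable ℂ a)
    (hc : Differentiable ℂ c) {w₀ : ℂ} (hw₀ : 0 < (a w₀).re + n) :
    DifferentiableAt ℂ (fun w => tricomiAux z n (a w) (c w)) w₀ := by
  induction n generalizing a c with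
  | zero =>
    exact ((differentiable_one_div_Gamma.comp ha) w₀).mul
      (differentiableAt_integral_tricomiIntegrand hz ha hc (by simpa using hw₀))
  | succ n ih =>
    have hw₀_succ : 0 < (a w₀ + 1).re + n := by
      rw [add_re, one_re, add_assoc, add_comm 1]
      exact_mod_cast hw₀
    exact (ih (ha.add_const 1) hc hw₀_succ).sub (((hc w₀).div_const _).mul
      (ih (ha.add_const 1) (hc.sub_const 1) hw₀_succ))

/-- `tricomi z a c` is `z ^ a * U(a, a + c + 1, z)` with `U` Tricomi's confluent hypergeometric
function: the entire continuation in `a` and `c` of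
`(Gamma a)⁻¹ * ∫ t in Ioi 0, tricomiIntegrand z a c t`. -/
noncomputable def tricomi (z : ℝ) (a c : ℂ) : ℂ :=
  tricomiAux z (⌊-a.re⌋₊ + 1) a c

lemma tricomi_eq_tricomiAux (hz : 0 < z) (n : ℕ) {a : ℂ} (c : ℂ) (ha : 0 < a.re + n) :
    tricomi z a c = tricomiAux z n a c := by
  have hfloor : 0 < a.re + (⌊-a.re⌋₊ + 1 : ℕ) := by
    push_cast
    linarith [Nat.lt_floor_add_one (-a.re)]
  rw [tricomi, ← tricomiAux_eq_of_le hz (le_max_left _ n) c hfloor,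
    ← tricomiAux_eq_of_le hz (le_max_right _ n) c ha]

lemma tricomi_of_re_pos (hz : 0 < z) {a : ℂ} (c : ℂ) (ha : 0 < a.re) :
    tricomi z a c = (Gamma a)⁻¹ * ∫ t in Ioi 0, tricomiIntegrand z a c t :=
  tricomi_eq_tricomiAux hz 0 c (by simpa using ha)

lemma differentiable_tricomi (hz : 0 < z) {a c : ℂ → ℂ} (ha : Differentiable ℂ a)
    (hc : Differentiable ℂ c) : Differentiable ℂ (fun w => tricomi z (a w) (c w)) := by
  intro w₀
  obtain ⟨n, hn⟩ := exists_nat_gt (-(a w₀).re)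
  have hn' : 0 < (a w₀).re + n := by linarith
  have hopen : IsOpen {w | 0 < (a w).re + n} :=
    isOpen_lt continuous_const ((continuous_re.comp ha.continuous).add continuous_const)
  refine (differentiableAt_tricomiAux hz n ha hc hn').congr_of_eventuallyEq ?_
  filter_upwards [hopen.mem_nhds hn'] with w hw using tricomi_eq_tricomiAux hz n _ hw

lemma Gamma_mul_integral_tricomiIntegrand_neg (hz : 0 < z) (a : ℂ) {a' : ℂ} (ha' : 0 < a'.re) :
    Gamma a' * ∫ t in Ioi 0, tricomiIntegrand z a (-a') t =
      ∫ t : ℝ in Ioi 0, ∫ u : ℝ in Ioi 0, (t : ℂ) ^ (a - 1) * cexp (-t) *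
        ((u : ℂ) ^ (a' - 1) * cexp (-u)) * cexp (-(t * u / z)) := by
  rw [← integral_const_mul]
  refine setIntegral_congr_fun measurableSet_Ioi fun t (ht : 0 < t) => ?_
  have hGamma := integral_cpow_mul_exp_neg_mul_of_re_pos ha' (r := (1 + t / z : ℝ))
    (by rw [ofReal_re]; positivity)
  calc Gamma a' * tricomiIntegrand z a (-a') t
      = (t : ℂ) ^ (a - 1) * cexp (-t) * (((1 + t / z : ℝ) : ℂ) ^ (-a') * Gamma a') := by
        rw [tricomiIntegrand]
        ring
    _ = _ := by
      rw [← hGamma, ← integral_const_mul]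
      refine integral_congr_ae (.of_forall fun u => ?_)
      have hexp : cexp (-((1 + t / z : ℝ) * u)) = cexp (-u) * cexp (-(t * u / z)) := by
        rw [← Complex.exp_add]
        push_cast
        ring_nf
      simp only [hexp]
      ring

lemma ae_prod_restrict_Ioi_norm_exp_neg_le_one (hz : 0 < z) :
    ∀ᵐ p : ℝ × ℝ ∂(volume.restrict (Ioi 0)).prod (volume.restrict (Ioi 0)),
      ‖cexp (-(p.1 * p.2 / z))‖ ≤ 1 := by
  rw [Measure.prod_restrict]
  filter_upwards [ae_restrict_mem (measurableSet_Ioi.prod measurableSet_Ioi)]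
    with p ⟨(hp₁ : 0 < p.1), (hp₂ : 0 < p.2)⟩
  have hre : (-(p.1 * p.2 / z : ℂ)).re = -(p.1 * p.2 / z) := by norm_cast
  rw [norm_exp, hre, Real.exp_le_one_iff, neg_nonpos]
  positivity

/- Kummer's transformation: both sides are the same double Gamma integral. -/
lemma tricomi_neg (hz : 0 < z) {a a' : ℂ} (ha : 0 < a.re) (ha' : 0 < a'.re) :
    tricomi z a (-a') = tricomi z a' (-a) := by
  have hswap : Gamma a' * ∫ t in Ioi 0, tricomiIntegrand z a (-a') t =
      Gamma a * ∫ t in Ioi 0, tricomiIntegrand z a' (-a) t := by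
    rw [Gamma_mul_integral_tricomiIntegrand_neg hz a ha',
      Gamma_mul_integral_tricomiIntegrand_neg hz a' ha,
      integral_integral_swap_of_norm_le (integrableOn_cpow_mul_exp_neg ha).integrable
        (integrableOn_cpow_mul_exp_neg ha').integrable
        (k := fun p : ℝ × ℝ => cexp (-(p.1 * p.2 / z)))
        (by fun_prop) (ae_prod_restrict_Ioi_norm_exp_neg_le_one hz)]
    refine integral_congr_ae (.of_forall fun t => integral_congr_ae (.of_forall fun u => ?_))
    ring_nf
  have hGamma := Gamma_ne_zero_of_re_pos ha
  have hGamma' := Gamma_ne_zero_of_re_pos ha'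
  rw [tricomi_of_re_pos hz _ ha, tricomi_of_re_pos hz _ ha']
  field_simp
  linear_combination hswap

end Tricomi

section Whittaker

variable {z : ℝ}

/-- Whittaker's function `W_{κ,μ}(z)` for real `z > 0`, through
`W_{κ,μ}(z) = exp (-z/2) * z ^ (μ + 1/2) * U(μ - κ + 1/2, 2 * μ + 1, z)`. -/
noncomputable def whittakerW (κ μ : ℂ) (z : ℝ) : ℂ :=
  cexp (-(z / 2)) * (z : ℂ) ^ κ * tricomi z (μ - κ + 1 / 2) (μ + κ - 1 / 2)

lemma differentiable_whittakerW_right (hz : 0 < z) (κ : ℂ) :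
    Differentiable ℂ fun μ => whittakerW κ μ z :=
  (differentiable_tricomi hz (a := fun μ => μ - κ + 1 / 2) (c := fun μ => μ + κ - 1 / 2)
    (by fun_prop) (by fun_prop)).const_mul _

lemma differentiable_whittakerW_left (hz : 0 < z) (μ : ℂ) :
    Differentiable ℂ fun κ => whittakerW κ μ z :=
  ((differentiable_id.const_cpow (.inl (ofReal_ne_zero.2 hz.ne'))).const_mul _).mul
    (differentiable_tricomi hz (a := fun κ => μ - κ + 1 / 2) (c := fun κ => μ + κ - 1 / 2)
      (by fun_prop) (by fun_prop))

lemma whittakerW_eq_integral (hz : 0 < z) {κ μ : ℂ} (h : 0 < (μ - κ + 1 / 2).re) :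
    whittakerW κ μ z = cexp (-(z / 2)) * (z : ℂ) ^ κ / Gamma (μ - κ + 1 / 2) *
      ∫ t in Ioi 0, tricomiIntegrand z (μ - κ + 1 / 2) (μ + κ - 1 / 2) t := by
  rw [whittakerW, tricomi_of_re_pos hz _ h]
  ring

lemma whittakerW_neg (hz : 0 < z) (κ μ : ℂ) : whittakerW κ (-μ) z = whittakerW κ μ z := by
  let κ₀ : ℂ := (-|μ.re| - 1 : ℝ)
  have hκ₀ : {κ : ℂ | κ.re < -|μ.re|} ∈ 𝓝 κ₀ :=
    (isOpen_lt continuous_re continuous_const).mem_nhds (by simp [κ₀])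
  refine congrFun (AnalyticOnNhd.eq_of_eventuallyEq (z₀ := κ₀)
    (fun κ _ => (differentiable_whittakerW_left hz (-μ)).analyticAt κ)
    (fun κ _ => (differentiable_whittakerW_left hz μ).analyticAt κ) ?_) κ
  filter_upwards [hκ₀] with κ (hκ : κ.re < -|μ.re|)
  have hpos : 0 < (μ - κ + 1 / 2).re := by
    norm_num
    linarith [neg_abs_le μ.re]
  have hneg : 0 < (-μ - κ + 1 / 2).re := by
    norm_num
    linarith [le_abs_self μ.re]
  have h := tricomi_neg hz hneg hpos
  rw [whittakerW, whittakerW, show -μ + κ - 1 / 2 = -(μ - κ + 1 / 2) by ring, h]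
  ring_nf

end Whittaker

section OneAddMulI

lemma exp_arctan_mul_I (b : ℝ) : cexp (Real.arctan b * I) = (1 + b * I) / √(b ^ 2 + 1) := by
  rw [exp_mul_I, ← ofReal_cos, ← ofReal_sin, Real.cos_arctan, Real.sin_arctan, add_comm 1 (b ^ 2)]
  push_cast
  ring

lemma exp_log_add_arctan_mul_I (b : ℝ) :
    cexp (Real.log (b ^ 2 + 1) / 2 + Real.arctan b * I) = 1 + b * I := by
  have hpos : 0 < b ^ 2 + 1 := by positivity
  have hsqrt : cexp (Real.log (b ^ 2 + 1) / 2) = √(b ^ 2 + 1) := by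
    rw [← Real.exp_log (Real.sqrt_pos.2 hpos), Real.log_sqrt hpos.le]
    push_cast
    rfl
  have hne : (√(b ^ 2 + 1) : ℂ) ≠ 0 := ofReal_ne_zero.2 (Real.sqrt_ne_zero'.2 hpos)
  rw [Complex.exp_add, hsqrt, exp_arctan_mul_I, mul_div_cancel₀ _ hne]

lemma one_add_mul_I_cpow (b : ℝ) (w : ℂ) :
    (1 + b * I) ^ w = cexp ((Real.log (b ^ 2 + 1) / 2 + Real.arctan b * I) * w) := by
  have him : (Real.log (b ^ 2 + 1) / 2 + Real.arctan b * I : ℂ).im = Real.arctan b := by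
    rw [← ofReal_ofNat, ← ofReal_div, add_im, ofReal_im, mul_I_im, ofReal_re, zero_add]
  have hne : (1 + b * I : ℂ) ≠ 0 := by
    rw [← exp_log_add_arctan_mul_I]
    exact exp_ne_zero _
  rw [cpow_def_of_ne_zero hne, ← exp_log_add_arctan_mul_I, log_exp]
  · rw [him]
    linarith [Real.neg_pi_div_two_lt_arctan b, Real.pi_pos]
  · rw [him]
    linarith [Real.arctan_lt_pi_div_two b, Real.pi_pos]

lemma one_sub_mul_I_cpow (b : ℝ) (w : ℂ) :
    (1 - b * I) ^ w = cexp ((Real.log (b ^ 2 + 1) / 2 - Real.arctan b * I) * w) := by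
  have h := one_add_mul_I_cpow (-b) w
  simpa only [ofReal_neg, neg_mul, neg_sq, Real.arctan_neg, ← sub_eq_add_neg] using h

lemma continuous_log_sq_add_one : Continuous fun b : ℝ => Real.log (b ^ 2 + 1) :=
  Continuous.log (by fun_prop) fun b => by positivity

lemma continuous_one_add_mul_I_cpow (w : ℂ) : Continuous fun b : ℝ => (1 + b * I) ^ w := by
  have hlog := continuous_log_sq_add_one
  simp only [one_add_mul_I_cpow]
  fun_prop

lemma norm_exp_mul_arctan_mul_I_le (w : ℂ) (b : ℝ) :
    ‖cexp (w * (Real.arctan b * I))‖ ≤ Real.exp (π / 2 * |w.im|) := by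
  have hre : (w * (Real.arctan b * I)).re = Real.arctan b * -w.im := by
    rw [← mul_assoc, mul_I_re, im_mul_ofReal]
    ring
  have harctan : |Real.arctan b| ≤ π / 2 :=
    abs_le.2 ⟨(Real.neg_pi_div_two_lt_arctan b).le, (Real.arctan_lt_pi_div_two b).le⟩
  rw [norm_exp, hre, Real.exp_le_exp]
  calc Real.arctan b * -w.im ≤ |Real.arctan b| * |w.im| := by
        rw [← abs_neg w.im, ← abs_mul]
        exact le_abs_self _
    _ ≤ π / 2 * |w.im| := by gcongr

lemma integrable_one_add_mul_I_cpow_neg {A : ℂ} (hA : 1 < A.re) :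
    Integrable fun b : ℝ => (1 + b * I) ^ (-A) := by
  refine ((integrable_rpow_neg_one_add_norm_sq (E := ℝ) (μ := volume) (r := A.re)
    (by simpa using hA)).mul_const (Real.exp (π / 2 * |(-A).im|))).mono'
    (continuous_one_add_mul_I_cpow _).aestronglyMeasurable (.of_forall fun b => ?_)
  have hpos : 0 < b ^ 2 + 1 := by positivity
  rw [one_add_mul_I_cpow, add_mul, Complex.exp_add, norm_mul, mul_comm _ (-A), mul_comm _ (-A)]
  refine mul_le_mul (le_of_eq ?_) (norm_exp_mul_arctan_mul_I_le _ _) (norm_nonneg _) (by positivity)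
  rw [norm_exp, Real.norm_eq_abs, sq_abs, add_comm 1, Real.rpow_def_of_pos hpos]
  congr 1
  rw [← ofReal_ofNat, ← ofReal_div, re_mul_ofReal, neg_re]
  ring

lemma integral_cpow_mul_exp_neg_mul_exp_I_mul {B : ℂ} (hB : 0 < B.re) (b : ℝ) :
    ∫ v : ℝ in Ioi 0, (v : ℂ) ^ (B - 1) * cexp (-v) * cexp (I * v * b) =
      (1 - b * I) ^ (-B) * Gamma B := by
  rw [← integral_cpow_mul_exp_neg_mul_of_re_pos hB (by simp)]
  refine integral_congr_ae (.of_forall fun v => ?_)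
  simp only [mul_assoc, ← Complex.exp_add]
  ring_nf

/-- The complex-valued density `t ^ (A - 1) * exp (-t)` of the Gamma integral, extended by `0` to
the whole line so that its Fourier transform makes sense. -/
noncomputable def gammaDensity (A : ℂ) : ℝ → ℂ :=
  indicator (Ioi 0) fun t => (t : ℂ) ^ (A - 1) * cexp (-t)

lemma integrable_gammaDensity {A : ℂ} (hA : 0 < A.re) : Integrable (gammaDensity A) :=
  (integrable_indicator_iff measurableSet_Ioi).2 (integrableOn_cpow_mul_exp_neg hA)

lemma continuousAt_gammaDensity (A : ℂ) {v : ℝ} (hv : 0 < v) : ContinuousAt (gammaDensity A) v := by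
  have hcont : ContinuousOn (fun t : ℝ => (t : ℂ) ^ (A - 1) * cexp (-t)) (Ioi 0) :=
    (continuousOn_ofReal_cpow_const _).mul (by fun_prop)
  refine (hcont.continuousAt (Ioi_mem_nhds hv)).congr ?_
  filter_upwards [Ioi_mem_nhds hv] with t ht
  rw [gammaDensity, indicator_of_mem ht]

lemma fourier_gammaDensity {A : ℂ} (hA : 0 < A.re) (ξ : ℝ) :
    𝓕 (gammaDensity A) ξ = Gamma A * (1 + (2 * π * ξ : ℝ) * I) ^ (-A) := by
  have h := integral_cpow_mul_exp_neg_mul_exp_I_mul hA (-(2 * π * ξ))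
  rw [ofReal_neg, neg_mul, sub_neg_eq_add, mul_comm _ (Gamma A)] at h
  rw [← h, Real.fourier_real_eq_integral_exp_smul, ← integral_indicator measurableSet_Ioi]
  refine integral_congr_ae (.of_forall fun t => ?_)
  simp only [gammaDensity, indicator, smul_eq_mul, mul_ite, mul_zero]
  push_cast
  ring_nf

lemma integral_one_add_mul_I_cpow_neg_mul_exp {A : ℂ} (hA : 1 < A.re) {v : ℝ} (hv : 0 < v) :
    ∫ b : ℝ, (1 + b * I) ^ (-A) * cexp (I * v * b) =
      2 * π / Gamma A * ((v : ℂ) ^ (A - 1) * cexp (-v)) := by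
  have hA₀ : 0 < A.re := one_pos.trans hA
  have hGamma := Gamma_ne_zero_of_re_pos hA₀
  have hfourier := funext (fourier_gammaDensity hA₀)
  have hintegrable : Integrable (𝓕 (gammaDensity A)) := by
    rw [hfourier]
    exact ((integrable_one_add_mul_I_cpow_neg hA).comp_mul_left' Real.two_pi_pos.ne').const_mul _
  have hinv := (integrable_gammaDensity hA₀).fourierInv_fourier_eq hintegrable
    (continuousAt_gammaDensity A hv)
  have hscale := Measure.integral_comp_mul_left
    (fun b : ℝ => (1 + b * I) ^ (-A) * cexp (I * v * b)) (2 * π)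
  rw [abs_of_pos (inv_pos.2 Real.two_pi_pos), eq_inv_smul_iff₀ Real.two_pi_pos.ne',
    real_smul] at hscale
  have hexp (ξ : ℝ) : cexp (((-2 * π * ξ * -v : ℝ) : ℂ) * I) •
      (Gamma A * (1 + (2 * π * ξ : ℝ) * I) ^ (-A)) =
        Gamma A * ((1 + (2 * π * ξ : ℝ) * I) ^ (-A) * cexp (I * v * (2 * π * ξ : ℝ))) := by
    rw [smul_eq_mul, mul_comm, mul_assoc]
    push_cast
    ring_nf
  rw [Real.fourierInv_eq_fourier_neg, Real.fourier_real_eq_integral_exp_smul, hfourier,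
    integral_congr_ae (.of_forall hexp), integral_const_mul, gammaDensity,
    indicator_of_mem (mem_Ioi.2 hv)] at hinv
  rw [← hscale, ← hinv, ← mul_assoc, div_mul_cancel₀ _ hGamma, ofReal_mul, ofReal_ofNat]

end OneAddMulI

section Jacquet

/-- The integrand of the archimedean Jacquet integral of weight `2 * κ`, without its character.
The factor `exp (2 * κ * arctan b * I)` is `((1 + b * I) / √(b ^ 2 + 1)) ^ (2 * κ)`, which in this
form makes sense for every complex `κ`. -/
noncomputable def jacquetKernel (s κ : ℂ) (b : ℝ) : ℂ :=
  ((b ^ 2 + 1 : ℝ) : ℂ) ^ (-(s + 1 / 2)) * cexp (2 * κ * (Real.arctan b * I))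

/-- The archimedean Jacquet integral: the Fourier transform of `jacquetKernel s κ`, normalized by
the character `exp (I * t * b)`. -/
noncomputable def jacquetIntegral (s κ : ℂ) (t : ℝ) : ℂ :=
  ∫ b : ℝ, jacquetKernel s κ b * cexp (I * t * b)

variable {s κ : ℂ} {t : ℝ}

lemma ofReal_cpow_eq_exp {x : ℝ} (hx : 0 < x) (w : ℂ) : (x : ℂ) ^ w = cexp (Real.log x * w) := by
  rw [cpow_def_of_ne_zero (ofReal_ne_zero.2 hx.ne'), ofReal_log hx.le]

lemma jacquetKernel_eq_cpow_mul_cpow (s κ : ℂ) (b : ℝ) :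
    jacquetKernel s κ b = (1 + b * I) ^ (-(s + 1 / 2 - κ)) * (1 - b * I) ^ (-(s + 1 / 2 + κ)) := by
  rw [jacquetKernel, one_add_mul_I_cpow, one_sub_mul_I_cpow, ofReal_cpow_eq_exp (by positivity),
    ← Complex.exp_add, ← Complex.exp_add]
  ring_nf

lemma sub_I_div_sqrt_zpow (b : ℝ) (k : ℤ) :
    (((b : ℂ) - I) / (√(b ^ 2 + 1) : ℝ)) ^ k =
      (-I) ^ k * cexp (2 * (k / 2) * (Real.arctan b * I)) := by
  have hbase : ((b : ℂ) - I) / (√(b ^ 2 + 1) : ℝ) = -I * cexp (Real.arctan b * I) := by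
    rw [exp_arctan_mul_I, mul_div_assoc']
    congr 1
    linear_combination (b : ℂ) * I_sq
  rw [hbase, mul_zpow, ← exp_int_mul, mul_div_cancel₀ _ two_ne_zero]

lemma jacquetIntegral_neg (s κ : ℂ) (t : ℝ) :
    jacquetIntegral s κ (-t) = jacquetIntegral s (-κ) t := by
  rw [jacquetIntegral, ← integral_neg_eq_self]
  refine integral_congr_ae (.of_forall fun b => ?_)
  simp only [jacquetKernel, neg_sq, Real.arctan_neg, ofReal_neg, mul_neg, neg_mul, neg_neg]

lemma norm_exp_I_mul_ofReal_mul_ofReal (t b : ℝ) : ‖cexp (I * t * b)‖ = 1 := by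
  rw [mul_assoc, ← ofReal_mul, norm_exp_I_mul_ofReal]

lemma continuous_jacquetKernel (s κ : ℂ) : Continuous (jacquetKernel s κ) := by
  have hlog := continuous_log_sq_add_one
  have hexp (b : ℝ) : jacquetKernel s κ b =
      cexp (Real.log (b ^ 2 + 1) * (-(s + 1 / 2))) * cexp (2 * κ * (Real.arctan b * I)) := by
    rw [jacquetKernel, ofReal_cpow_eq_exp (by positivity)]
  simp only [funext hexp]
  fun_prop

lemma norm_jacquetKernel_le {σ : ℝ} (hσ : σ ≤ s.re) (κ : ℂ) (b : ℝ) :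
    ‖jacquetKernel s κ b‖ ≤
      (1 + ‖b‖ ^ 2) ^ (-(2 * σ + 1) / 2) * Real.exp (π / 2 * |(2 * κ).im|) := by
  have hre : (-(s + 1 / 2)).re = -(2 * s.re + 1) / 2 := by
    norm_num
    ring
  rw [jacquetKernel, norm_mul, norm_cpow_eq_rpow_re_of_pos (by positivity), hre, Real.norm_eq_abs,
    sq_abs, add_comm 1]
  gcongr
  · exact le_add_of_nonneg_left (sq_nonneg b)
  · exact norm_exp_mul_arctan_mul_I_le _ _

lemma differentiableOn_jacquetIntegral (κ : ℂ) (t : ℝ) :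
    DifferentiableOn ℂ (fun s => jacquetIntegral s κ t) {s | 0 < s.re} := by
  intro s₀ (hs₀ : 0 < s₀.re)
  have hU : {s : ℂ | s₀.re / 2 < s.re} ∈ 𝓝 s₀ :=
    (isOpen_lt continuous_const continuous_re).mem_nhds (half_lt_self hs₀)
  have hbound := (integrable_rpow_neg_one_add_norm_sq (E := ℝ) (μ := volume)
    (r := 2 * (s₀.re / 2) + 1) (by simpa using hs₀)).mul_const
      (Real.exp (π / 2 * |(2 * κ).im|))
  refine (differentiableAt_integral_of_dominated hU (fun s _ => ?_) (.of_forall fun b s hs => ?_)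
    hbound (.of_forall fun b => Differentiable.differentiableOn ?_)).differentiableWithinAt
  · exact ((continuous_jacquetKernel s κ).mul (by fun_prop)).aestronglyMeasurable
  · rw [norm_mul, norm_exp_I_mul_ofReal_mul_ofReal, mul_one]
    exact norm_jacquetKernel_le (le_of_lt hs) κ b
  · have hne : ((b ^ 2 + 1 : ℝ) : ℂ) ≠ 0 := ofReal_ne_zero.2 (by positivity)
    exact ((Differentiable.const_cpow (by fun_prop) (.inl hne)).mul_const _).mul_const _

lemma integral_one_add_cpow_mul_one_sub_cpow {A B : ℂ} (hA : 1 < A.re) (hB : 0 < B.re)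
    (ht : 0 < t) :
    (∫ b : ℝ, (1 + b * I) ^ (-A) * (1 - b * I) ^ (-B) * cexp (I * t * b)) * Gamma B =
      2 * π / Gamma A *
        ∫ v : ℝ in Ioi 0,
          (v : ℂ) ^ (B - 1) * ((t + v : ℝ) : ℂ) ^ (A - 1) * cexp (-(t + 2 * v)) := by
  have hinner_v (b : ℝ) : ∫ v : ℝ in Ioi 0, (1 + b * I) ^ (-A) * ((v : ℂ) ^ (B - 1) * cexp (-v)) *
      cexp (I * (t + v : ℝ) * b) =
        (1 + b * I) ^ (-A) * (1 - b * I) ^ (-B) * cexp (I * t * b) * Gamma B := by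
    rw [show ∀ x y z w : ℂ, x * y * z * w = x * z * (y * w) by intros; ring,
      ← integral_cpow_mul_exp_neg_mul_exp_I_mul hB, ← integral_const_mul]
    refine integral_congr_ae (.of_forall fun v => ?_)
    simp only [ofReal_add, mul_add, add_mul, Complex.exp_add]
    ring
  have hinner_b (v : ℝ) (hv : 0 < v) : ∫ b : ℝ, (1 + b * I) ^ (-A) *
      ((v : ℂ) ^ (B - 1) * cexp (-v)) * cexp (I * (t + v : ℝ) * b) = 2 * π / Gamma A *
        ((v : ℂ) ^ (B - 1) * ((t + v : ℝ) : ℂ) ^ (A - 1) * cexp (-(t + 2 * v))) := by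
    have hexp : cexp (-(t + 2 * v)) = cexp (-v) * cexp (-(t + v : ℝ)) := by
      rw [← Complex.exp_add]
      push_cast
      ring_nf
    simp only [mul_right_comm _ ((v : ℂ) ^ (B - 1) * cexp (-v))]
    rw [integral_mul_const, integral_one_add_mul_I_cpow_neg_mul_exp hA (by positivity), hexp]
    ring
  rw [← integral_mul_const, ← integral_const_mul,
    ← setIntegral_congr_fun measurableSet_Ioi hinner_b]
  simp only [← hinner_v]
  exact integral_integral_swap_of_norm_le (integrable_one_add_mul_I_cpow_neg hA)
    (integrableOn_cpow_mul_exp_neg hB).integrable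
    (k := fun p : ℝ × ℝ => cexp (I * (t + p.2 : ℝ) * p.1)) (by fun_prop)
    (.of_forall fun p => (norm_exp_I_mul_ofReal_mul_ofReal _ _).le)

lemma integral_cpow_mul_add_cpow_mul_exp (ht : 0 < t) (B C : ℂ) :
    ∫ v : ℝ in Ioi 0, (v : ℂ) ^ (B - 1) * ((t + v : ℝ) : ℂ) ^ C * cexp (-(t + 2 * v)) =
      2 ^ (-B) * (t : ℂ) ^ C * cexp (-t) * ∫ x in Ioi 0, tricomiIntegrand (2 * t) B C x := by
  have hscale : ∫ v : ℝ in Ioi 0, tricomiIntegrand (2 * t) B C (2 * v) =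
      2⁻¹ * ∫ x in Ioi 0, tricomiIntegrand (2 * t) B C x := by
    rw [integral_comp_mul_left_Ioi _ _ two_pos, mul_zero, real_smul, ofReal_inv, ofReal_ofNat]
  have htwo : (2 : ℂ) ^ (-B) = 2 ^ (1 - B) * 2⁻¹ := by
    rw [sub_eq_add_neg, cpow_add _ _ two_ne_zero, cpow_one]
    ring
  have hrhs : 2 ^ (-B) * (t : ℂ) ^ C * cexp (-t) * ∫ x in Ioi 0, tricomiIntegrand (2 * t) B C x =
      2 ^ (1 - B) * (t : ℂ) ^ C * cexp (-t) *
        ∫ v : ℝ in Ioi 0, tricomiIntegrand (2 * t) B C (2 * v) := by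
    rw [hscale, htwo]
    ring
  rw [hrhs, ← integral_const_mul]
  refine setIntegral_congr_fun measurableSet_Ioi fun v (hv : 0 < v) => ?_
  have hadd : ((t + v : ℝ) : ℂ) ^ C = (t : ℂ) ^ C * ((1 + 2 * v / (2 * t) : ℝ) : ℂ) ^ C := by
    rw [← mul_cpow_ofReal_nonneg ht.le (by positivity), ← ofReal_mul]
    congr 2
    field_simp
  have hpow : (v : ℂ) ^ (B - 1) = 2 ^ (1 - B) * ((2 * v : ℝ) : ℂ) ^ (B - 1) := by
    rw [ofReal_mul, mul_cpow_ofReal_nonneg two_pos.le hv.le, ← mul_assoc, ofReal_ofNat,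
      ← cpow_add _ _ two_ne_zero, sub_add_sub_cancel, sub_self, cpow_zero, one_mul]
  have hexp : cexp (-(t + 2 * v)) = cexp (-t) * cexp (-(2 * v : ℝ)) := by
    rw [← Complex.exp_add]
    push_cast
    ring_nf
  simp only [tricomiIntegrand]
  rw [hadd, hpow, hexp]
  ring

lemma two_pi_mul_two_cpow_mul_ofReal_cpow (ht : 0 < t) (s κ : ℂ) :
    2 * π * (2 ^ (-(s + 1 / 2 + κ)) * (t : ℂ) ^ (s - κ - 1 / 2)) =
      (π : ℂ) ^ (s + 1 / 2) * ((t / (2 * π) : ℝ) : ℂ) ^ (s - 1 / 2) *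
        ((2 * t : ℝ) : ℂ) ^ (-κ) := by
  have hpi := Real.pi_pos
  have hexp {x : ℝ} (hx : 0 < x) : (x : ℂ) = cexp (Real.log x) := by
    rw [← ofReal_exp, Real.exp_log hx]
  have htwo (w : ℂ) : (2 : ℂ) ^ w = cexp (Real.log 2 * w) := by
    rw [← ofReal_cpow_eq_exp two_pos, ofReal_ofNat]
  have htwo_pi : (2 * π : ℂ) = cexp (Real.log 2 + Real.log π) := by
    rw [Complex.exp_add, ← hexp hpi, ← hexp two_pos, ofReal_ofNat]
  rw [htwo_pi, htwo, ofReal_cpow_eq_exp ht, ofReal_cpow_eq_exp hpi,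
    ofReal_cpow_eq_exp (by positivity), ofReal_cpow_eq_exp (by positivity),
    Real.log_div ht.ne' (by positivity), Real.log_mul two_ne_zero hpi.ne',
    Real.log_mul two_ne_zero ht.ne']
  simp only [← Complex.exp_add]
  push_cast
  ring_nf

lemma jacquetIntegral_of_lt_re (hs : |κ.re| + 1 / 2 < s.re) (ht : 0 < t) :
    jacquetIntegral s κ t = (π : ℂ) ^ (s + 1 / 2) * ((t / (2 * π) : ℝ) : ℂ) ^ (s - 1 / 2) /
      Gamma (s + 1 / 2 - κ) * whittakerW (-κ) (-s) (2 * t) := by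
  have hA : 1 < (s + 1 / 2 - κ).re := by
    norm_num
    linarith [le_abs_self κ.re]
  have hB : 0 < (s + 1 / 2 + κ).re := by
    norm_num
    linarith [neg_abs_le κ.re]
  have h := integral_one_add_cpow_mul_one_sub_cpow hA hB ht
  rw [integral_cpow_mul_add_cpow_mul_exp ht, ← eq_div_iff (Gamma_ne_zero_of_re_pos hB)] at h
  have hz : 0 < 2 * t := by positivity
  simp only [jacquetIntegral, jacquetKernel_eq_cpow_mul_cpow]
  rw [h, whittakerW_neg hz, whittakerW, show s - -κ + 1 / 2 = s + 1 / 2 + κ by ring,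
    show s + -κ - 1 / 2 = s - κ - 1 / 2 by ring, show s + 1 / 2 - κ - 1 = s - κ - 1 / 2 by ring,
    tricomi_of_re_pos hz _ hB, show -(((2 * t : ℝ) : ℂ) / 2) = -t by push_cast; ring]
  linear_combination cexp (-t) / (Gamma (s + 1 / 2 - κ) * Gamma (s + 1 / 2 + κ)) *
    (∫ x in Ioi 0, tricomiIntegrand (2 * t) (s + 1 / 2 + κ) (s - κ - 1 / 2) x) *
      two_pi_mul_two_cpow_mul_ofReal_cpow ht s κ

lemma jacquetIntegral_of_pos (hs : 0 < s.re) (κ : ℂ) (ht : 0 < t) :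
    jacquetIntegral s κ t = (π : ℂ) ^ (s + 1 / 2) * ((t / (2 * π) : ℝ) : ℂ) ^ (s - 1 / 2) /
      Gamma (s + 1 / 2 - κ) * whittakerW (-κ) (-s) (2 * t) := by
  have hpi : (π : ℂ) ≠ 0 := ofReal_ne_zero.2 Real.pi_ne_zero
  have htpi : ((t / (2 * π) : ℝ) : ℂ) ≠ 0 := ofReal_ne_zero.2 (by positivity)
  have hopen (σ : ℝ) : IsOpen {s : ℂ | σ < s.re} := isOpen_lt continuous_const continuous_re
  have hrhs : Differentiable ℂ fun s => (π : ℂ) ^ (s + 1 / 2) *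
      ((t / (2 * π) : ℝ) : ℂ) ^ (s - 1 / 2) * (Gamma (s + 1 / 2 - κ))⁻¹ *
        whittakerW (-κ) (-s) (2 * t) :=
    (((Differentiable.const_cpow (by fun_prop) (.inl hpi)).mul
      (Differentiable.const_cpow (by fun_prop) (.inl htpi))).mul
      (differentiable_one_div_Gamma.comp (f := fun s => s + 1 / 2 - κ) (by fun_prop))).mul
      ((differentiable_whittakerW_right (by positivity) (-κ)).comp differentiable_neg)
  let s₀ : ℂ := (|κ.re| + 1 : ℝ)
  have hs₀ : |κ.re| + 1 / 2 < s₀.re := by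
    rw [ofReal_re]
    linarith
  refine ((differentiableOn_jacquetIntegral κ t).analyticOnNhd
    (hopen 0)).eqOn_of_preconnected_of_eventuallyEq (fun w _ => hrhs.analyticAt w)
    (convex_halfSpace_re_gt 0).isPreconnected (z₀ := s₀) ?_ ?_ hs
  · exact (by positivity : (0 : ℝ) < |κ.re| + 1 / 2).trans hs₀
  · filter_upwards [(hopen _).mem_nhds hs₀] with w hw using jacquetIntegral_of_lt_re hw ht

theorem jacquetIntegral_eq_whittakerW (hs : 0 < s.re) (κ : ℂ) (ht : t ≠ 0) :
    jacquetIntegral s κ t = (π : ℂ) ^ (s + 1 / 2) * ((|t| / (2 * π) : ℝ) : ℂ) ^ (s - 1 / 2) /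
      Gamma (s + 1 / 2 - Real.sign t * κ) * whittakerW (-Real.sign t * κ) (-s) (2 * |t|) := by
  rcases ht.lt_or_gt with ht | ht
  · have hreflect := jacquetIntegral_neg s κ (-t)
    rw [neg_neg] at hreflect
    rw [hreflect, jacquetIntegral_of_pos hs _ (neg_pos.2 ht), Real.sign_of_neg ht, abs_of_neg ht]
    simp
  · rw [jacquetIntegral_of_pos hs κ ht, Real.sign_of_pos ht, abs_of_pos ht]
    simp

lemma integral_mul_zpow_mul_exp_eq_jacquetIntegral (s : ℂ) (k : ℤ) (t : ℝ) :
    ∫ b : ℝ, ((b ^ 2 + 1 : ℝ) : ℂ) ^ (-(s + 1 / 2)) *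
        (((b : ℂ) - I) / (√(b ^ 2 + 1) : ℝ)) ^ k * cexp (I * t * b) =
      (-I) ^ k * jacquetIntegral s (k / 2) t := by
  rw [jacquetIntegral, ← integral_const_mul]
  refine integral_congr_ae (.of_forall fun b => ?_)
  simp only [sub_I_div_sqrt_zpow, jacquetKernel]
  ring

end Jacquet

lemma neg_I_zpow_of_even {k : ℤ} (hk : Even k) : (-I) ^ k = (-1 : ℂ) ^ (k / 2) := by
  obtain ⟨m, rfl⟩ := hk
  rw [← two_mul, Int.mul_ediv_cancel_left _ two_ne_zero, zpow_mul, zpow_ofNat, neg_sq, I_sq]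

/- For odd `k` the factor `(-1) ^ (k / 2)` would be truncated; `(-I) ^ k` is its correct form. -/
theorem stmt9_general :
    ∃ W : ℂ → ℂ → ℝ → ℂ,
      (∀ (κ : ℂ) (z : ℝ), 0 < z → Differentiable ℂ fun μ => W κ μ z) ∧
      (∀ (μ : ℂ) (z : ℝ), 0 < z → Differentiable ℂ fun κ => W κ μ z) ∧
      (∀ (κ μ : ℂ) (z : ℝ), 0 < z → 0 < (μ - κ + 1 / 2).re →
        W κ μ z = cexp (-(z / 2)) * (z : ℂ) ^ κ / Gamma (μ - κ + 1 / 2) *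
          ∫ t : ℝ in Ioi 0, (t : ℂ) ^ (μ - κ - 1 / 2) *
            (1 + (t : ℂ) / (z : ℂ)) ^ (μ + κ - 1 / 2) * Real.exp (-t)) ∧
      ∀ s : ℂ, 0 < s.re → ∀ (k : ℤ) (t : ℝ), t ≠ 0 →
        ∫ b : ℝ, ((b ^ 2 + 1 : ℝ) : ℂ) ^ (-(s + 1 / 2)) *
            (((b : ℂ) - I) / (√(b ^ 2 + 1) : ℝ)) ^ k * cexp (I * t * b) =
          (-I) ^ k * (π : ℂ) ^ (s + 1 / 2) * ((|t| / (2 * π) : ℝ) : ℂ) ^ (s - 1 / 2) /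
              Gamma (s + 1 / 2 - (Real.sign t : ℂ) * k / 2) *
            W (-(Real.sign t : ℂ) * k / 2) (-s) (2 * |t|) := by
  refine ⟨whittakerW, fun κ z hz => differentiable_whittakerW_right hz κ,
    fun μ z hz => differentiable_whittakerW_left hz μ, fun κ μ z hz h => ?_, fun s hs k t ht => ?_⟩
  · rw [whittakerW_eq_integral hz h]
    simp only [tricomiIntegrand, ofReal_add, ofReal_one, ofReal_div, ofReal_exp, ofReal_neg,
      show μ - κ + 1 / 2 - 1 = μ - κ - 1 / 2 by ring]
  · rw [integral_mul_zpow_mul_exp_eq_jacquetIntegral, jacquetIntegral_eq_whittakerW hs _ ht,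
      mul_div_assoc', mul_div_assoc']
    ring

/-- The archimedean Whittaker integral: there is a function `W` (the classical Whittaker
function `W_{κ,μ}`, characterized by being entire in each of `κ, μ` and agreeing with the
standard integral representation
`W_{κ,μ}(z) = e^{-z/2} z^κ Γ(μ-κ+1/2)⁻¹ ∫₀^∞ t^{μ-κ-1/2}(1+t/z)^{μ+κ-1/2}e^{-t} dt`
on its domain of validity) such that for `Re(s) > 0`, even `k` and real `t ≠ 0`:
`∫_ℝ (b²+1)^{-(s+1/2)} ((b-i)/√(b²+1))^k e^{itb} db
   = (-1)^{k/2} π^{s+1/2} (|t|/2π)^{s-1/2} / Γ(s+1/2 - sgn(t)k/2) · W_{-sgn(t)k/2, -s}(2|t|)`. -/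
theorem stmt9 :
    ∃ W : ℂ → ℂ → ℝ → ℂ,
      (∀ (κ : ℂ) (z : ℝ), 0 < z → Differentiable ℂ fun μ => W κ μ z) ∧
      (∀ (μ : ℂ) (z : ℝ), 0 < z → Differentiable ℂ fun κ => W κ μ z) ∧
      (∀ (κ μ : ℂ) (z : ℝ), 0 < z → 0 < (μ - κ + 1 / 2).re →
        W κ μ z = Complex.exp (-(z / 2)) * ((z : ℝ) : ℂ) ^ κ / Complex.Gamma (μ - κ + 1 / 2) *
          ∫ t in Set.Ioi (0 : ℝ),
            ((t : ℝ) : ℂ) ^ (μ - κ - 1 / 2) * (1 + ((t : ℝ) : ℂ) / ((z : ℝ) : ℂ)) ^ (μ + κ - 1 / 2) *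
              Real.exp (-t)) ∧
      ∀ (s : ℂ), 0 < s.re → ∀ (k : ℤ), Even k → ∀ (t : ℝ), t ≠ 0 →
        ∫ b : ℝ, ((b ^ 2 + 1 : ℝ) : ℂ) ^ (-(s + 1 / 2)) *
            (((b : ℂ) - I) / ((Real.sqrt (b ^ 2 + 1) : ℝ) : ℂ)) ^ k *
            Complex.exp (I * (t : ℂ) * (b : ℂ)) =
          (-1 : ℂ) ^ (k / 2) * ((Real.pi : ℝ) : ℂ) ^ (s + 1 / 2) *
              ((|t| / (2 * Real.pi) : ℝ) : ℂ) ^ (s - 1 / 2) /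
              Complex.Gamma (s + 1 / 2 - (Real.sign t : ℂ) * (k : ℂ) / 2) *
            W (-(Real.sign t : ℂ) * (k : ℂ) / 2) (-s) (2 * |t|) := by
  obtain ⟨W, hμ, hκ, hW, hint⟩ := stmt9_general
  exact ⟨W, hμ, hκ, hW, fun s hs k hk t ht => neg_I_zpow_of_even hk ▸ hint s hs k t ht⟩
end

section
/- With notation as in the local Whittaker computation: for the normalized spherical vector $f_s^{\rm sph} \in V_s$ (the $K$-invariant function with $f_s^{\rm sph}(1)=1$), $\alpha, y \in F^\times$, and $q^{2s} \neq 1$, one has $(W_s^\alpha f_s^{\rm sph})\big(\begin{pmatrix}y&0\\0&1\end{pmatrix}\big) = \frac{(|\alpha|^{2s}|y|^{1/2+s} - q^{2s}|y|^{1/2-s})(1 - q^{-2s-1})}{1-q^{2s}}$ if $v(\alpha y) \geq 0$, and $= 0$ if $v(\alpha y) < 0$. -/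
open Complex Matrix MeasureTheory Filter

/-!
Write `w`, `n(b)`, `a(y)` for the three matrices in the Whittaker integrand, so that `w n(b) a(y)`
has bottom row `(y, b)`. By the Iwasawa decomposition the spherical vector takes the value
`(|y| / max(|y|, |b|)²) ^ (s + 1/2)` there. As a function of `b` this is constant on the ball
`|b| ≤ |y|` and on each sphere outside it. The integral of `ψ(-αb)` over `𝔭⁻ᵐ` is `qᵐ` while
`ψ(-α ·)` is trivial on `𝔭⁻ᵐ`, and `0` beyond. Hence the integral over `𝔭⁻ⁿ` is a finite geometric
sum over spheres, and it stops depending on `n` as soon as `𝔭⁻ⁿ` exceeds the conductor of `ψ(-α ·)`.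
-/

section Coset

variable {V : Type*} [AddCommGroup V] {K : AddSubgroup V}

lemma eqOn_setOf_sub_mem {E : Type*} {g : V → E} (hg : ∀ x, ∀ k ∈ K, g (k + x) = g x) (c : V) :
    Set.EqOn g (fun _ => g c) {x | x - c ∈ K} := by
  intro x hx
  simpa using hg c (x - c) hx

variable [MeasurableSpace V] {μ : Measure V}

lemma measure_setOf_sub_mem (hμ : ∀ (t : V) (s : Set V), μ ((t + ·) ⁻¹' s) = μ s)
    (K : AddSubgroup V) (c : V) : μ {x | x - c ∈ K} = μ K := by
  rw [← hμ (-c) K]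
  congr 1
  ext x
  simp [sub_eq_neg_add]

lemma integrableOn_setOf_sub_mem {E : Type*} [NormedAddCommGroup E] {g : V → E}
    (hμ : ∀ (t : V) (s : Set V), μ ((t + ·) ⁻¹' s) = μ s)
    (hK : ∀ c, MeasurableSet {x | x - c ∈ K}) (hfin : μ K ≠ ⊤)
    (hg : ∀ x, ∀ k ∈ K, g (k + x) = g x) (c : V) : IntegrableOn g {x | x - c ∈ K} μ := by
  have hconst : IntegrableOn (fun _ => g c) {x | x - c ∈ K} μ :=
    integrableOn_const (by rwa [measure_setOf_sub_mem hμ])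
  exact hconst.congr_fun (eqOn_setOf_sub_mem hg c).symm (hK c)

end Coset

/-- `T` is a finite set of representatives for the cosets of `K` contained in `H`. Only additive
subgroups `K ≤ H` of finite relative index admit one. -/
structure IsTransversal {V : Type*} [AddCommGroup V] (K H : AddSubgroup V) (T : Finset V) :
    Prop where
  mem_iff : ∀ x, x ∈ H ↔ ∃ c ∈ T, x - c ∈ K
  eq_of_sub_mem : ∀ c ∈ T, ∀ c' ∈ T, c - c' ∈ K → c = c'

namespace IsTransversal

section Algebra

variable {V W : Type*} [AddCommGroup V] [AddCommGroup W] {K H : AddSubgroup V} {T : Finset V}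

lemma coe_eq_biUnion (hT : IsTransversal K H T) : (H : Set V) = ⋃ c ∈ T, {x | x - c ∈ K} := by
  ext x
  simp [hT.mem_iff]

lemma pairwiseDisjoint (hT : IsTransversal K H T) :
    (T : Set V).PairwiseDisjoint fun c => {x | x - c ∈ K} := by
  intro c hc c' hc' hne
  refine Set.disjoint_left.2 fun x hx hx' => hne (hT.eq_of_sub_mem c hc c' hc' ?_)
  simpa using K.sub_mem hx' hx

lemma le (hT : IsTransversal K H T) : K ≤ H := by
  intro x hx
  obtain ⟨c, hc, h0c⟩ := (hT.mem_iff 0).1 H.zero_mem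
  exact (hT.mem_iff x).2 ⟨c, hc, by simpa [sub_eq_add_neg] using K.add_mem hx h0c⟩

lemma map_addEquiv (hT : IsTransversal K H T) (e : V ≃+ W) {K' H' : AddSubgroup W}
    (hK : ∀ x, e x ∈ K' ↔ x ∈ K) (hH : ∀ x, e x ∈ H' ↔ x ∈ H) :
    IsTransversal K' H' (T.map (e : V ≃ W).toEmbedding) where
  mem_iff w := by
    obtain ⟨x, rfl⟩ := e.surjective w
    simp only [hH, hT.mem_iff, ← hK, map_sub, Finset.mem_map, exists_exists_and_eq_and]
    rfl
  eq_of_sub_mem := by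
    simp only [Finset.forall_mem_map]
    intro c hc c' hc' h
    exact congrArg e (hT.eq_of_sub_mem c hc c' hc' ((hK _).1 (by simpa using h)))

lemma map_addLeft (hT : IsTransversal K H T) {t : V} (ht : t ∈ H) :
    IsTransversal K H (T.map (addLeftEmbedding t)) where
  mem_iff x := by
    rw [← H.add_mem_cancel_right (H.neg_mem ht), ← sub_eq_add_neg, hT.mem_iff]
    simp [sub_sub]
  eq_of_sub_mem := by
    simp only [Finset.forall_mem_map, addLeftEmbedding_apply, add_sub_add_left_eq_sub]
    intro c hc c' hc' h
    rw [hT.eq_of_sub_mem c hc c' hc' h]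

end Algebra

section Measure

variable {V : Type*} [AddCommGroup V] [MeasurableSpace V] {μ : Measure V} {K H : AddSubgroup V}
  {T : Finset V}

lemma measure_eq (hT : IsTransversal K H T)
    (hμ : ∀ (t : V) (s : Set V), μ ((t + ·) ⁻¹' s) = μ s)
    (hK : ∀ c, MeasurableSet {x | x - c ∈ K}) : μ H = T.card * μ K := by
  rw [hT.coe_eq_biUnion, measure_biUnion_finset hT.pairwiseDisjoint fun c _ => hK c]
  simp [measure_setOf_sub_mem hμ]

lemma integrableOn {E : Type*} [NormedAddCommGroup E] {g : V → E} (hT : IsTransversal K H T)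
    (hμ : ∀ (t : V) (s : Set V), μ ((t + ·) ⁻¹' s) = μ s)
    (hK : ∀ c, MeasurableSet {x | x - c ∈ K}) (hfin : μ K ≠ ⊤)
    (hg : ∀ x, ∀ k ∈ K, g (k + x) = g x) : IntegrableOn g H μ := by
  rw [hT.coe_eq_biUnion, integrableOn_finset_iUnion]
  exact fun c _ => integrableOn_setOf_sub_mem hμ hK hfin hg c

lemma setIntegral_eq {E : Type*} [NormedAddCommGroup E] [NormedSpace ℝ E] [CompleteSpace E]
    {g : V → E} (hT : IsTransversal K H T)
    (hμ : ∀ (t : V) (s : Set V), μ ((t + ·) ⁻¹' s) = μ s)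
    (hK : ∀ c, MeasurableSet {x | x - c ∈ K}) (hfin : μ K ≠ ⊤)
    (hg : ∀ x, ∀ k ∈ K, g (k + x) = g x) : ∫ x in H, g x ∂μ = μ.real K • ∑ c ∈ T, g c := by
  rw [hT.coe_eq_biUnion, integral_biUnion_finset T (fun c _ => hK c) hT.pairwiseDisjoint
    fun c _ => integrableOn_setOf_sub_mem hμ hK hfin hg c, Finset.smul_sum]
  refine Finset.sum_congr rfl fun c _ => ?_
  rw [setIntegral_congr_fun (hK c) (eqOn_setOf_sub_mem hg c), setIntegral_const, Measure.real,
    measure_setOf_sub_mem hμ, Measure.real]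

lemma setIntegral_addChar_eq_zero {𝕜 : Type*} [RCLike 𝕜] {χ : AddChar V 𝕜}
    (hT : IsTransversal K H T)
    (hμ : ∀ (t : V) (s : Set V), μ ((t + ·) ⁻¹' s) = μ s)
    (hK : ∀ c, MeasurableSet {x | x - c ∈ K}) (hfin : μ K ≠ ⊤)
    (hχK : ∀ k ∈ K, χ k = 1) (hχH : ∃ t ∈ H, χ t ≠ 1) :
    ∫ x in H, χ x ∂μ = 0 := by
  obtain ⟨t, ht, hχt⟩ := hχH
  have hχ : ∀ x, ∀ k ∈ K, χ (k + x) = χ x := fun x k hk => by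
    rw [χ.map_add_eq_mul, hχK k hk, one_mul]
  have htranslate : ∫ x in H, χ x ∂μ = χ t * ∫ x in H, χ x ∂μ := by
    conv_lhs => rw [(hT.map_addLeft ht).setIntegral_eq hμ hK hfin hχ, Finset.sum_map]
    rw [hT.setIntegral_eq hμ hK hfin hχ, mul_smul_comm, Finset.mul_sum]
    simp only [addLeftEmbedding_apply, χ.map_add_eq_mul]
  exact (mul_left_eq_self₀.1 htranslate.symm).resolve_left hχt

end Measure

end IsTransversal

/-- An increasing family of additive subgroups `B m` with `[B (m + n) : B m] = q ^ n`, such as the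
fractional ideals `𝔭⁻ᵐ` of a non-archimedean local field, together with a translation-invariant
measure `μ` giving `B 0` mass one. Invariance is required of all sets, so that translations need
not be measurable. -/
structure IsHaarFiltration {V : Type*} [AddCommGroup V] [MeasurableSpace V]
    (B : ℤ → AddSubgroup V) (q : ℕ) (μ : Measure V) : Prop where
  exists_isTransversal : ∀ (m : ℤ) (n : ℕ), ∃ T : Finset V,
    T.card = q ^ n ∧ IsTransversal (B m) (B (m + n)) T
  measurableSet_setOf_sub_mem : ∀ m c, MeasurableSet {x | x - c ∈ B m}
  measure_preimage_add : ∀ (t : V) (s : Set V), μ ((t + ·) ⁻¹' s) = μ s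
  measure_zero : μ (B 0) = 1

/-- The additive character `χ` has conductor `B a` with respect to the filtration `B`: it is
trivial on `B a` but not on the next step `B (a + 1)`. -/
structure HasConductor {V M : Type*} [AddCommGroup V] [CommMonoid M] (B : ℤ → AddSubgroup V)
    (χ : AddChar V M) (a : ℤ) : Prop where
  map_eq_one : ∀ x ∈ B a, χ x = 1
  exists_map_ne_one : ∃ x ∈ B (a + 1), χ x ≠ 1

/-- `Φ` is constant on `B k` and on each later shell `B (n + 1) \ B n` of the filtration, its
values being `φ k` and `φ (n + 1)` respectively. -/
structure IsRadial {V M : Type*} [AddCommGroup V] (B : ℤ → AddSubgroup V) (k : ℤ) (φ : ℤ → M)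
    (Φ : V → M) : Prop where
  eq_of_mem : ∀ x ∈ B k, Φ x = φ k
  eq_of_mem_shell : ∀ n, k ≤ n → ∀ x ∈ (B (n + 1) \ B n : Set V), Φ x = φ (n + 1)

lemma mul_one_sub_eq_of_shell_recursion {𝕜 : Type*} [Field 𝕜] {Q Z C : 𝕜} (hQ : Q ≠ 0) (hZ : Z ≠ 0)
    {J : ℤ → 𝕜} {k a : ℤ} (hk : J k = C * (Z * Q) ^ (-k) * Q ^ k)
    (hJ : ∀ n, k ≤ n → n < a →
      J (n + 1) = J n + C * (Z * Q) ^ (-(n + 1)) * (Q ^ (n + 1) - Q ^ n))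
    {n : ℤ} (hkn : k ≤ n) (hna : n ≤ a) :
    J n * (1 - Z) = C * ((1 - Q⁻¹) * Z ^ (-n) - (1 - (Z * Q)⁻¹) * Z ^ (1 - k)) := by
  induction n, hkn using Int.leInduction with
  | base =>
    rw [hk, mul_zpow, zpow_sub₀ hZ, zpow_one, _root_.zpow_neg Z, _root_.zpow_neg Q]
    field_simp
    ring
  | succ n hkn ih =>
    rw [hJ n hkn (by lia), add_mul, ih (by lia), mul_zpow, neg_add, zpow_add₀ hZ, zpow_add₀ hQ,
      zpow_add₀ hQ, _root_.zpow_neg Q, _root_.zpow_neg_one, _root_.zpow_neg_one, zpow_one]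
    field_simp
    ring

namespace IsHaarFiltration

variable {V : Type*} [AddCommGroup V] [MeasurableSpace V] {B : ℤ → AddSubgroup V} {q : ℕ}
  {μ : Measure V}

lemma ne_zero (hB : IsHaarFiltration B q μ) : q ≠ 0 := by
  rintro rfl
  obtain ⟨T, hcard, hT⟩ := hB.exists_isTransversal 0 1
  obtain rfl : T = ∅ := by simpa using hcard
  simpa using (hT.mem_iff 0).1 (zero_mem _)

lemma monotone (hB : IsHaarFiltration B q μ) : Monotone B :=
  monotone_int_of_le_succ fun m => by
    obtain ⟨T, -, hT⟩ := hB.exists_isTransversal m 1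
    exact_mod_cast hT.le

lemma measurableSet (hB : IsHaarFiltration B q μ) (m : ℤ) : MeasurableSet (B m : Set V) := by
  simpa using hB.measurableSet_setOf_sub_mem m 0

lemma measure_succ (hB : IsHaarFiltration B q μ) (m : ℤ) : μ (B (m + 1)) = q * μ (B m) := by
  obtain ⟨T, hcard, hT⟩ := hB.exists_isTransversal m 1
  simpa [hcard] using hT.measure_eq hB.measure_preimage_add (hB.measurableSet_setOf_sub_mem m)

lemma measureReal_eq_zpow (hB : IsHaarFiltration B q μ) (m : ℤ) : μ.real (B m) = (q : ℝ) ^ m := by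
  have hq : (q : ℝ) ≠ 0 := by exact_mod_cast hB.ne_zero
  have hsucc : ∀ n, μ.real (B (n + 1)) = q * μ.real (B n) := fun n => by
    simp [Measure.real, hB.measure_succ]
  induction m using Int.induction_on with
  | zero => simp [Measure.real, hB.measure_zero]
  | succ n ih => rw [hsucc, ih, ← zpow_one_add₀ hq, add_comm]
  | pred n ih =>
    rw [← sub_add_cancel (-(n : ℤ)) 1, hsucc, add_comm, zpow_one_add₀ hq] at ih
    exact mul_left_cancel₀ hq ih

lemma measure_ne_top (hB : IsHaarFiltration B q μ) (m : ℤ) : μ (B m) ≠ ⊤ := by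
  intro htop
  have hreal := hB.measureReal_eq_zpow m
  rw [Measure.real, htop, ENNReal.toReal_top] at hreal
  exact zpow_ne_zero m (by exact_mod_cast hB.ne_zero) hreal.symm

section Integral

variable {𝕜 : Type*} [RCLike 𝕜] {χ : AddChar V 𝕜} {a k : ℤ}

lemma setIntegral_addChar_of_le (hB : IsHaarFiltration B q μ) (hχ : HasConductor B χ a) {m : ℤ}
    (hm : m ≤ a) : ∫ x in B m, χ x ∂μ = (q : 𝕜) ^ m := by
  rw [setIntegral_congr_fun (hB.measurableSet m) (g := fun _ => (1 : 𝕜))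
    fun x hx => hχ.map_eq_one x (hB.monotone hm hx), setIntegral_const, hB.measureReal_eq_zpow,
    RCLike.real_smul_eq_coe_mul]
  simp

lemma setIntegral_addChar_of_lt (hB : IsHaarFiltration B q μ) (hχ : HasConductor B χ a) {m : ℤ}
    (hm : a < m) : ∫ x in B m, χ x ∂μ = 0 := by
  obtain ⟨n, rfl⟩ := Int.le.dest hm.le
  obtain ⟨T, -, hT⟩ := hB.exists_isTransversal a n
  obtain ⟨t, ht, hχt⟩ := hχ.exists_map_ne_one
  exact hT.setIntegral_addChar_eq_zero hB.measure_preimage_add (hB.measurableSet_setOf_sub_mem a)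
    (hB.measure_ne_top a) hχ.map_eq_one ⟨t, hB.monotone hm ht, hχt⟩

lemma integrableOn_addChar (hB : IsHaarFiltration B q μ) (hχ : HasConductor B χ a) (m : ℤ) :
    IntegrableOn χ (B m) μ := by
  suffices hup : IntegrableOn χ (B (a + (m - a).toNat)) μ from
    hup.mono_set (hB.monotone (by lia))
  obtain ⟨T, -, hT⟩ := hB.exists_isTransversal a (m - a).toNat
  refine hT.integrableOn hB.measure_preimage_add (hB.measurableSet_setOf_sub_mem a)
    (hB.measure_ne_top a) fun x c hc => ?_
  rw [χ.map_add_eq_mul, hχ.map_eq_one c hc, one_mul]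

variable {φ : ℤ → 𝕜} {Φ g : V → 𝕜}

lemma setIntegral_radial_mul_base (hB : IsHaarFiltration B q μ) (hΦ : IsRadial B k φ Φ) :
    ∫ x in B k, Φ x * g x ∂μ = φ k * ∫ x in B k, g x ∂μ := by
  rw [← integral_const_mul]
  exact setIntegral_congr_fun (hB.measurableSet k) fun x hx => by simp only [hΦ.eq_of_mem x hx]

lemma integrableOn_radial_mul_shell (hB : IsHaarFiltration B q μ) (hΦ : IsRadial B k φ Φ)
    (hg : ∀ m, IntegrableOn g (B m) μ) {n : ℤ} (hn : k ≤ n) :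
    IntegrableOn (fun x => Φ x * g x) (B (n + 1) \ B n) μ := by
  have hconst : IntegrableOn (fun x => φ (n + 1) * g x) (B (n + 1) \ B n) μ :=
    ((hg (n + 1)).mono_set Set.sdiff_subset).const_mul _
  exact hconst.congr_fun (fun x hx => by simp only [hΦ.eq_of_mem_shell n hn x hx])
    ((hB.measurableSet _).diff (hB.measurableSet _))

lemma coe_union_shell (hB : IsHaarFiltration B q μ) (n : ℤ) :
    (B n ∪ B (n + 1) \ B n : Set V) = B (n + 1) :=
  Set.union_sdiff_cancel (hB.monotone (by lia))

lemma integrableOn_radial_mul (hB : IsHaarFiltration B q μ) (hΦ : IsRadial B k φ Φ)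
    (hg : ∀ m, IntegrableOn g (B m) μ) {n : ℤ} (hn : k ≤ n) :
    IntegrableOn (fun x => Φ x * g x) (B n) μ := by
  induction n, hn using Int.leInduction with
  | base =>
    have hconst : IntegrableOn (fun x => φ k * g x) (B k) μ := (hg k).const_mul _
    exact hconst.congr_fun (fun x hx => by simp only [hΦ.eq_of_mem x hx]) (hB.measurableSet k)
  | succ n hn ih =>
    rw [← hB.coe_union_shell]
    exact ih.union (hB.integrableOn_radial_mul_shell hΦ hg hn)

lemma setIntegral_radial_mul_succ (hB : IsHaarFiltration B q μ) (hΦ : IsRadial B k φ Φ)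
    (hg : ∀ m, IntegrableOn g (B m) μ) {n : ℤ} (hn : k ≤ n) :
    ∫ x in B (n + 1), Φ x * g x ∂μ = ∫ x in B n, Φ x * g x ∂μ +
      φ (n + 1) * (∫ x in B (n + 1), g x ∂μ - ∫ x in B n, g x ∂μ) := by
  have hshell : MeasurableSet (B (n + 1) \ B n : Set V) :=
    (hB.measurableSet _).diff (hB.measurableSet _)
  rw [← setIntegral_sdiff (hB.measurableSet n) (hg (n + 1)) (hB.monotone (by lia)),
    ← integral_const_mul, ← setIntegral_congr_fun hshell
      fun x hx => congrArg (· * g x) (hΦ.eq_of_mem_shell n hn x hx),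
    ← setIntegral_union Set.disjoint_sdiff_right hshell (hB.integrableOn_radial_mul hΦ hg hn)
      (hB.integrableOn_radial_mul_shell hΦ hg hn), hB.coe_union_shell]

theorem setIntegral_radial_mul_addChar_eq_zero (hB : IsHaarFiltration B q μ)
    (hΦ : IsRadial B k φ Φ) (hχ : HasConductor B χ a) (hak : a < k) {n : ℤ} (hn : k ≤ n) :
    ∫ x in B n, Φ x * χ x ∂μ = 0 := by
  induction n, hn using Int.leInduction with
  | base => rw [hB.setIntegral_radial_mul_base hΦ, hB.setIntegral_addChar_of_lt hχ hak, mul_zero]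
  | succ n hn ih =>
    rw [hB.setIntegral_radial_mul_succ hΦ (hB.integrableOn_addChar hχ) hn, ih,
      hB.setIntegral_addChar_of_lt hχ (by lia), hB.setIntegral_addChar_of_lt hχ (by lia)]
    simp

variable {Z C : 𝕜}

theorem setIntegral_radial_mul_addChar (hB : IsHaarFiltration B q μ)
    (hΦ : IsRadial B k (fun m => C * (Z * q) ^ (-m)) Φ) (hχ : HasConductor B χ a) (hka : k ≤ a)
    (hZ0 : Z ≠ 0) (hZ1 : Z ≠ 1) {n : ℤ} (hn : a < n) :
    ∫ x in B n, Φ x * χ x ∂μ =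
      C * (Z ^ (-a) - Z ^ (1 - k)) * (1 - (Z * q)⁻¹) / (1 - Z) := by
  have hq : (q : 𝕜) ≠ 0 := by exact_mod_cast hB.ne_zero
  have hsucc := fun {m : ℤ} =>
    hB.setIntegral_radial_mul_succ (n := m) hΦ (hB.integrableOn_addChar hχ)
  induction n, hn using Int.leInduction with
  | base =>
    have hinner : (∫ x in B a, Φ x * χ x ∂μ) * (1 - Z) = _ :=
      mul_one_sub_eq_of_shell_recursion hq hZ0 (J := fun m => ∫ x in B m, Φ x * χ x ∂μ)
        (by rw [hB.setIntegral_radial_mul_base hΦ, hB.setIntegral_addChar_of_le hχ hka])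
        (fun m hkm hma => by
          rw [hsucc hkm, hB.setIntegral_addChar_of_le hχ hma,
            hB.setIntegral_addChar_of_le hχ hma.le])
        hka le_rfl
    rw [eq_div_iff (sub_ne_zero.2 hZ1.symm), hsucc hka, hB.setIntegral_addChar_of_le hχ le_rfl,
      hB.setIntegral_addChar_of_lt hχ (by lia), add_mul, hinner, mul_zpow, neg_add, zpow_add₀ hZ0,
      zpow_add₀ hq, _root_.zpow_neg (q : 𝕜), _root_.zpow_neg_one, _root_.zpow_neg_one]
    field_simp
    ring
  | succ n hn ih =>
    rw [hsucc (by lia), ih, hB.setIntegral_addChar_of_lt hχ (by lia),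
      hB.setIntegral_addChar_of_lt hχ (by lia)]
    simp

end Integral

end IsHaarFiltration

section DiscreteAbsoluteValue

variable {F : Type*} [Field F] {abv : AbsoluteValue F ℝ}

lemma abv_eq_zpow_of_lt_of_le {q : ℝ} (hq : 1 < q)
    (hdisc : ∀ x, x ≠ 0 → ∃ m : ℤ, abv x = q ^ m) {x : F} {n : ℤ} (hlt : q ^ n < abv x)
    (hle : abv x ≤ q ^ (n + 1)) : abv x = q ^ (n + 1) := by
  have hx : x ≠ 0 := abv.pos_iff.1 ((zpow_pos (by positivity) n).trans hlt)
  obtain ⟨m, hm⟩ := hdisc x hx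
  rw [hm] at hlt hle ⊢
  have hnm := (zpow_lt_zpow_iff_right₀ hq).1 hlt
  have hmn := (zpow_le_zpow_iff_right₀ hq).1 hle
  rw [le_antisymm hmn hnm]

lemma abv_le_of_lt_mul {q : ℝ} (hq : 1 < q) (hdisc : ∀ x, x ≠ 0 → ∃ m : ℤ, abv x = q ^ m)
    {x y : F} (hxy : abv x < q * abv y) : abv x ≤ abv y := by
  have hy : y ≠ 0 := by
    rintro rfl
    simpa using (abv.nonneg x).trans_lt hxy
  obtain ⟨m, hm⟩ := hdisc y hy
  rw [hm, ← zpow_one_add₀ (by positivity), add_comm] at hxy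
  rw [hm]
  by_contra! hlt
  exact hxy.ne (abv_eq_zpow_of_lt_of_le hq hdisc hlt hxy.le)

/- `|n + 1| ≤ |n| + 1 < q |n|` once `|n|` exceeds `1 / (q - 1)`, so by discreteness the values `|n|`
stop growing there. -/
lemma abv_natCast_le {q : ℝ} (hq : 1 < q) (hdisc : ∀ x, x ≠ 0 → ∃ m : ℤ, abv x = q ^ m)
    (n : ℕ) : abv (n : F) ≤ 1 / (q - 1) + 1 := by
  have hq' : 0 < q - 1 := sub_pos.2 hq
  induction n with
  | zero => simpa using by positivity
  | succ n ih =>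
    have hadd : abv ((n + 1 : ℕ) : F) ≤ abv (n : F) + 1 := by
      simpa using abv.add_le (n : F) 1
    rcases le_or_gt (abv (n : F)) (1 / (q - 1)) with hsmall | hlarge
    · linarith
    · have hlt : abv (n : F) + 1 < q * abv (n : F) := by
        rw [div_lt_iff₀ hq'] at hlarge
        linarith
      exact (abv_le_of_lt_mul hq hdisc (hadd.trans_lt hlt)).trans ih

lemma abv_natCast_le_one_of_bounded {C : ℝ} (hC : ∀ n : ℕ, abv (n : F) ≤ C) (n : ℕ) :
    abv (n : F) ≤ 1 := by
  by_contra! hn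
  obtain ⟨k, hk⟩ := pow_unbounded_of_one_lt C hn
  exact (hC (n ^ k)).not_gt (by simpa using hk)

theorem isNonarchimedean_of_discrete {q : ℝ} (hq : 1 < q)
    (hdisc : ∀ x, x ≠ 0 → ∃ m : ℤ, abv x = q ^ m) : IsNonarchimedean abv := by
  let : NormedField F := abv.toNormedField
  have hultra : IsUltrametricDist F :=
    IsUltrametricDist.isUltrametricDist_of_forall_norm_natCast_le_one
      (abv_natCast_le_one_of_bounded (abv_natCast_le hq hdisc))
  exact hultra.norm_add_le_max

end DiscreteAbsoluteValue

section ZPowBall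

variable {F : Type*} [Field F] {abv : AbsoluteValue F ℝ} {q : ℕ}

/-- The fractional ideal `𝔭⁻ᵐ` of a non-archimedean field whose uniformizers have absolute value
`q⁻¹`, as the closed ball of radius `q ^ m`. -/
def zpowBall (hna : IsNonarchimedean abv) (q : ℕ) (m : ℤ) : AddSubgroup F where
  carrier := {x | abv x ≤ (q : ℝ) ^ m}
  zero_mem' := by simpa using by positivity
  add_mem' hx hy := (hna _ _).trans (max_le hx hy)
  neg_mem' hx := by simpa using hx

@[simp] lemma mem_zpowBall {hna : IsNonarchimedean abv} {m : ℤ} {x : F} :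
    x ∈ zpowBall hna q m ↔ abv x ≤ (q : ℝ) ^ m := Iff.rfl

lemma mul_zpow_mem_zpowBall_iff {hna : IsNonarchimedean abv} (hq : q ≠ 0) {p : F}
    (hp : abv p = q) {m n : ℤ} {x : F} :
    p ^ m * x ∈ zpowBall hna q (m + n) ↔ x ∈ zpowBall hna q n := by
  have hq' : (0 : ℝ) < q := by positivity
  rw [mem_zpowBall, mem_zpowBall, map_mul, map_zpow₀, hp, zpow_add₀ hq'.ne',
    mul_le_mul_iff_right₀ (zpow_pos hq' m)]

lemma IsTransversal.mul_zpow {hna : IsNonarchimedean abv} (hq : q ≠ 0) {p : F}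
    (hp : abv p = q) {n : ℤ} {T : Finset F}
    (hT : IsTransversal (zpowBall hna q 0) (zpowBall hna q n) T) (m : ℤ) :
    ∃ T' : Finset F, T'.card = T.card ∧
      IsTransversal (zpowBall hna q m) (zpowBall hna q (m + n)) T' := by
  have hp0 : p ≠ 0 := abv.pos_iff.1 (by rw [hp]; positivity)
  refine ⟨_, T.card_map _, hT.map_addEquiv
    (DistribMulAction.toAddEquiv₀ F (p ^ m) (zpow_ne_zero m hp0)) (fun x => ?_) fun x => ?_⟩
  · have hx := mul_zpow_mem_zpowBall_iff (hna := hna) (m := m) (n := 0) (x := x) hq hp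
    rwa [add_zero] at hx
  · exact mul_zpow_mem_zpowBall_iff hq hp

theorem isHaarFiltration_zpowBall [MeasurableSpace F] {μ : Measure F}
    {hna : IsNonarchimedean abv} (hq : q ≠ 0) {p : F} (hp : abv p = q)
    (hμ1 : μ {x : F | abv x ≤ 1} = 1)
    (hμinv : ∀ (t : F) (s : Set F), μ ((t + ·) ⁻¹' s) = μ s)
    (hmeas : ∀ (c : F) (r : ℝ), MeasurableSet {x : F | abv (x - c) ≤ r})
    (hcoset : ∀ n : ℕ, ∃ T : Finset F, T.card = q ^ n ∧
      ({x : F | abv x ≤ (q : ℝ) ^ n} = ⋃ c ∈ T, {x : F | abv (x - c) ≤ 1}) ∧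
      ∀ c ∈ T, ∀ c' ∈ T, c ≠ c' → 1 < abv (c - c')) :
    IsHaarFiltration (zpowBall hna q) q μ where
  exists_isTransversal m n := by
    obtain ⟨T, hcard, hcover, hsep⟩ := hcoset n
    have hT : IsTransversal (zpowBall hna q 0) (zpowBall hna q n) T :=
      { mem_iff := fun x => by simpa using Set.ext_iff.1 hcover x
        eq_of_sub_mem := fun c hc c' hc' hmem => by
          by_contra hne
          exact (hsep c hc c' hc' hne).not_ge (by simpa using hmem) }
    simpa only [hcard] using hT.mul_zpow hq hp m
  measurableSet_setOf_sub_mem m c := hmeas c _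
  measure_preimage_add := hμinv
  measure_zero := by simpa [zpowBall] using hμ1

lemma exists_abv_eq_and_ne_one {M : Type*} [One M] {ψ : F → M} (hq : 1 < q)
    (hdisc : ∀ x, x ≠ 0 → ∃ m : ℤ, abv x = (q : ℝ) ^ m) (hψtriv : ∀ x, abv x ≤ 1 → ψ x = 1)
    (hψnt : ∃ x, abv x ≤ (q : ℝ) ∧ ψ x ≠ 1) : ∃ p, abv p = q ∧ ψ p ≠ 1 := by
  obtain ⟨p, hp, hψp⟩ := hψnt
  have hp1 : 1 < abv p := not_le.1 fun h => hψp (hψtriv p h)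
  refine ⟨p, ?_, hψp⟩
  simpa using abv_eq_zpow_of_lt_of_le (n := 0) (by exact_mod_cast hq) hdisc (by simpa using hp1)
    (by simpa using hp)

lemma hasConductor_mulShift {M : Type*} [CommMonoid M] {χ : AddChar F M}
    {hna : IsNonarchimedean abv} (hq : q ≠ 0) (hχtriv : ∀ x, abv x ≤ 1 → χ x = 1) {p : F}
    (hp : abv p = q) (hχp : χ p ≠ 1) {r : F} {a : ℤ} (hr : abv r = (q : ℝ) ^ (-a)) :
    HasConductor (zpowBall hna q) (χ.mulShift r) a where
  map_eq_one x hx := by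
    rw [AddChar.mulShift_apply]
    refine hχtriv _ ?_
    rw [map_mul, hr, _root_.zpow_neg, inv_mul_le_iff₀ (by positivity), mul_one]
    exact hx
  exists_map_ne_one := by
    have hr0 : r ≠ 0 := abv.pos_iff.1 (by rw [hr]; positivity)
    refine ⟨r⁻¹ * p, ?_, ?_⟩
    · rw [mem_zpowBall, map_mul, map_inv₀, hr, hp, _root_.zpow_neg, inv_inv,
        zpow_add_one₀ (by positivity)]
    · rwa [AddChar.mulShift_apply, mul_inv_cancel_left₀ hr0]

end ZPowBall

section Cpow

lemma ofReal_zpow_cpow {r : ℝ} (hr : 0 < r) (k : ℤ) (w : ℂ) :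
    ((r ^ k : ℝ) : ℂ) ^ w = ((r : ℂ) ^ w) ^ k := by
  have hr' : (r : ℂ) ≠ 0 := ofReal_ne_zero.2 hr.ne'
  have hrk : ((r ^ k : ℝ) : ℂ) ≠ 0 := ofReal_ne_zero.2 (zpow_pos hr k).ne'
  rw [cpow_def_of_ne_zero hrk, cpow_def_of_ne_zero hr', ← ofReal_log (zpow_pos hr k).le,
    ← ofReal_log hr.le, Real.log_zpow, ← exp_int_mul]
  push_cast
  ring_nf

lemma cpow_add_half_sq {z : ℂ} (hz : z ≠ 0) (s : ℂ) : (z ^ (s + 1 / 2)) ^ 2 = z ^ (2 * s) * z := by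
  rw [← cpow_nat_mul, Nat.cast_two, mul_add, mul_one_div_cancel two_ne_zero, cpow_add _ _ hz,
    cpow_one]

/- For `|α| = r ^ (-a)` and `|y| = r ^ k`, this rewrites the closed formula in terms of the ratio
`Z = r ^ (2 * s)` of the geometric sum over spheres. -/
lemma whittaker_formula_eq_zpow {r : ℝ} (hr : 0 < r) (s : ℂ) (a k : ℤ) :
    (((r ^ (-a) : ℝ) : ℂ) ^ (2 * s) * ((r ^ k : ℝ) : ℂ) ^ (1 / 2 + s) -
        (r : ℂ) ^ (2 * s) * ((r ^ k : ℝ) : ℂ) ^ (1 / 2 - s)) * (1 - (r : ℂ) ^ (-(2 * s) - 1)) =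
      ((r ^ k : ℝ) : ℂ) ^ (s + 1 / 2) *
        (((r : ℂ) ^ (2 * s)) ^ (-a) - ((r : ℂ) ^ (2 * s)) ^ (1 - k)) *
        (1 - ((r : ℂ) ^ (2 * s) * r)⁻¹) := by
  have hr' : (r : ℂ) ≠ 0 := ofReal_ne_zero.2 hr.ne'
  have hZ : (r : ℂ) ^ (2 * s) ≠ 0 := by simp [cpow_eq_zero_iff, hr']
  have hrk : ((r ^ k : ℝ) : ℂ) ≠ 0 := ofReal_ne_zero.2 (zpow_pos hr k).ne'
  have hhalf : ((r ^ k : ℝ) : ℂ) ^ (1 / 2 - s) =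
      ((r ^ k : ℝ) : ℂ) ^ (s + 1 / 2) * ((r : ℂ) ^ (2 * s)) ^ (-k) := by
    rw [_root_.zpow_neg, ← ofReal_zpow_cpow hr, ← cpow_neg, ← cpow_add _ _ hrk]
    ring_nf
  have hinv : (r : ℂ) ^ (-(2 * s) - 1) = ((r : ℂ) ^ (2 * s) * r)⁻¹ := by
    rw [cpow_sub _ _ hr', cpow_neg, cpow_one, mul_inv, div_eq_mul_inv]
  rw [hhalf, hinv, ofReal_zpow_cpow hr (-a), add_comm (1 / 2) s, sub_eq_add_neg 1 k,
    zpow_one_add₀ hZ]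
  ring

end Cpow

section Spherical

variable {F : Type*} [Field F] {abv : AbsoluteValue F ℝ} {s : ℂ} {f : Matrix (Fin 2) (Fin 2) F → ℂ}

/-- `f` is the normalized spherical vector of the principal series `V_s`: it transforms under the
Borel subgroup through `|a / d| ^ (s + 1/2)`, is right invariant under `K = GL(2, 𝔬)`, and takes
the value `1` at the identity. It is encoded as a function on all matrices, of which only the
values on invertible ones matter. -/
structure IsNormalizedSpherical (abv : AbsoluteValue F ℝ) (s : ℂ)
    (f : Matrix (Fin 2) (Fin 2) F → ℂ) : Prop where
  map_borel_mul : ∀ a d : F, a ≠ 0 → d ≠ 0 → ∀ (b : F) (g : Matrix (Fin 2) (Fin 2) F),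
    f (!![a, b; 0, d] * g) = ((abv (a * d⁻¹) : ℝ) : ℂ) ^ (s + 1 / 2) * f g
  map_mul_integral : ∀ g κ : Matrix (Fin 2) (Fin 2) F,
    abv (κ 0 0) ≤ 1 → abv (κ 0 1) ≤ 1 → abv (κ 1 0) ≤ 1 → abv (κ 1 1) ≤ 1 →
    abv κ.det = 1 → f (g * κ) = f g
  map_one : f 1 = 1

namespace IsNormalizedSpherical

lemma map_borel_mul_integral (hf : IsNormalizedSpherical abv s f) {a b d k₁₁ k₁₂ k₂₁ k₂₂ : F}
    (ha : a ≠ 0) (hd : d ≠ 0) (h₁₁ : abv k₁₁ ≤ 1) (h₁₂ : abv k₁₂ ≤ 1) (h₂₁ : abv k₂₁ ≤ 1)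
    (h₂₂ : abv k₂₂ ≤ 1) (hdet : abv (k₁₁ * k₂₂ - k₁₂ * k₂₁) = 1) :
    f (!![a, b; 0, d] * !![k₁₁, k₁₂; k₂₁, k₂₂]) = ((abv (a / d) : ℝ) : ℂ) ^ (s + 1 / 2) := by
  have hκ := hf.map_mul_integral 1 !![k₁₁, k₁₂; k₂₁, k₂₂] h₁₁ h₁₂ h₂₁ h₂₂
    (by rwa [det_fin_two_of])
  rw [hf.map_borel_mul a d ha hd, ← one_mul !![k₁₁, k₁₂; k₂₁, k₂₂], hκ, hf.map_one, mul_one,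
    div_eq_mul_inv a d]

/- Iwasawa decomposition: the bottom row `(y, b)` is divided by its entry of larger absolute
value to give the bottom row of an element of `K`. -/
lemma apply_eq (hf : IsNormalizedSpherical abv s f) {y : F} (hy : y ≠ 0) (b : F) :
    f !![0, -1; y, b] = ((abv y / max (abv y) (abv b) ^ 2 : ℝ) : ℂ) ^ (s + 1 / 2) := by
  rcases le_total (abv b) (abv y) with hby | hyb
  · have hiwasawa : !![0, -1; y, b] = !![1, 0; 0, y] * !![0, -1; 1, b / y] := by
      simp [mul_div_cancel₀ b hy]
    rw [hiwasawa, hf.map_borel_mul_integral one_ne_zero hy (by simp) (by simp) (by simp)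
      (by simpa using div_le_one_of_le₀ hby (abv.nonneg y)) (by simp), max_eq_left hby]
    have hy' : abv y ≠ 0 := abv.ne_zero hy
    congr 2
    rw [map_div₀, abv.map_one]
    field_simp
  · have hb : b ≠ 0 := abv.pos_iff.1 ((abv.pos hy).trans_le hyb)
    have hiwasawa : !![0, -1; y, b] = !![y / b, -1; 0, b] * !![1, 0; y / b, 1] := by
      simp [mul_div_cancel₀ y hb]
    rw [hiwasawa, hf.map_borel_mul_integral (div_ne_zero hy hb) hb (by simp) (by simp)
      (by simpa using div_le_one_of_le₀ hyb (abv.nonneg b)) (by simp) (by simp),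
      max_eq_right hyb, div_div, map_div₀, map_mul, sq]

lemma isRadial {q : ℕ} {hna : IsNonarchimedean abv} (hf : IsNormalizedSpherical abv s f)
    (hq : 1 < q) (hdisc : ∀ x, x ≠ 0 → ∃ m : ℤ, abv x = (q : ℝ) ^ m) {y : F} {k : ℤ}
    (hy : abv y = (q : ℝ) ^ k) :
    IsRadial (zpowBall hna q) k
      (fun m => ((abv y : ℝ) : ℂ) ^ (s + 1 / 2) * ((q : ℂ) ^ (2 * s) * q) ^ (-m))
      (fun b => f !![0, -1; y, b]) := by
  have hq0 : (0 : ℝ) < q := by positivity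
  have hq1 : (1 : ℝ) < q := by exact_mod_cast hq
  have hy0 : y ≠ 0 := abv.pos_iff.1 (by rw [hy]; positivity)
  have hvalue : ∀ (m : ℤ) (b : F), max (abv y) (abv b) = (q : ℝ) ^ m → f !![0, -1; y, b] =
      ((abv y : ℝ) : ℂ) ^ (s + 1 / 2) * ((q : ℂ) ^ (2 * s) * q) ^ (-m) := by
    intro m b hmax
    have hqC : (q : ℂ) ≠ 0 := by exact_mod_cast hq0.ne'
    rw [hf.apply_eq hy0, hmax, hy, ← zpow_natCast, ← _root_.zpow_mul, ← zpow_sub₀ hq0.ne',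
      ofReal_zpow_cpow hq0, ofReal_zpow_cpow hq0, ofReal_natCast, ← cpow_add_half_sq hqC,
      ← zpow_natCast, ← _root_.zpow_mul, ← zpow_add₀ (by simp [cpow_eq_zero_iff, hqC])]
    congr 1
    push_cast
    ring
  refine ⟨fun b hb => hvalue k b ?_, fun n hn b hb => hvalue (n + 1) b ?_⟩
  · rw [hy, max_eq_left (mem_zpowBall.1 hb)]
  · have habv : abv b = (q : ℝ) ^ (n + 1) :=
      abv_eq_zpow_of_lt_of_le hq1 hdisc (not_le.1 hb.2) (mem_zpowBall.1 hb.1)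
    rw [hy, habv, max_eq_right (zpow_le_zpow_right₀ hq1.le (by lia))]

end IsNormalizedSpherical

lemma setIntegral_whittaker_eq_zpowBall [MeasurableSpace F] {μ : Measure F} {q : ℕ}
    (hna : IsNonarchimedean abv) (f : Matrix (Fin 2) (Fin 2) F → ℂ) (χ : AddChar F ℂ) (α y : F)
    (n : ℕ) :
    ∫ b in {b : F | abv b ≤ (q : ℝ) ^ n},
        f (!![0, -1; 1, 0] * !![1, b; 0, 1] * !![y, 0; 0, 1]) * χ (-(α * b)) ∂μ =
      ∫ b in zpowBall hna q n, f !![0, -1; y, b] * χ.mulShift (-α) b ∂μ := by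
  simp [zpowBall, AddChar.mulShift_apply]

end Spherical

/-- The local Whittaker function of the normalized spherical vector `f_s^sph` in the
principal series `V_s` of `GL(2,F)`, `F` a non-archimedean local field of residue
cardinality `q`:
`(W_s^α f_s^sph)(diag(y,1)) = (|α|^{2s}|y|^{1/2+s} - q^{2s}|y|^{1/2-s})(1-q^{-2s-1})/(1-q^{2s})`
if `v(αy) ≥ 0`, and `0` if `v(αy) < 0`.  The Whittaker integral is realised as the limit of
the integrals over `𝔭^{-n}`. -/
theorem stmt13 {F : Type*} [Field F] [MeasurableSpace F]
    (abv : AbsoluteValue F ℝ) (q : ℕ) (hq : 1 < q)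
    (hdisc : ∀ x : F, x ≠ 0 → ∃ m : ℤ, abv x = (q : ℝ) ^ m)
    (μ : Measure F)
    (hμ1 : μ {x : F | abv x ≤ 1} = 1)
    (hμinv : ∀ (t : F) (s : Set F), μ ((t + ·) ⁻¹' s) = μ s)
    (hmeas : ∀ (c : F) (r : ℝ), MeasurableSet {x : F | abv (x - c) ≤ r})
    (hcoset : ∀ n : ℕ, ∃ T : Finset F, T.card = q ^ n ∧
      ({x : F | abv x ≤ (q : ℝ) ^ n} = ⋃ c ∈ T, {x : F | abv (x - c) ≤ 1}) ∧
      ∀ c ∈ T, ∀ c' ∈ T, c ≠ c' → 1 < abv (c - c'))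
    (ψ : F → ℂ)
    (hψtriv : ∀ x : F, abv x ≤ 1 → ψ x = 1)
    (hψnt : ∃ x : F, abv x ≤ (q : ℝ) ∧ ψ x ≠ 1)
    (hψadd : ∀ x y : F, ψ (x + y) = ψ x * ψ y)
    (s : ℂ) (hs : (((q : ℝ)) : ℂ) ^ (2 * s) ≠ 1)
    (f : Matrix (Fin 2) (Fin 2) F → ℂ)
    (htrans : ∀ (a d : F), a ≠ 0 → d ≠ 0 → ∀ (b : F) (g : Matrix (Fin 2) (Fin 2) F),
      f (!![a, b; 0, d] * g) = ((abv (a * d⁻¹) : ℝ) : ℂ) ^ (s + 1 / 2) * f g)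
    (hK : ∀ (g κ : Matrix (Fin 2) (Fin 2) F),
      abv (κ 0 0) ≤ 1 → abv (κ 0 1) ≤ 1 → abv (κ 1 0) ≤ 1 → abv (κ 1 1) ≤ 1 →
      abv κ.det = 1 → f (g * κ) = f g)
    (hone : f 1 = 1)
    (α y : F) (hα : α ≠ 0) (hy : y ≠ 0) :
    (abv (α * y) ≤ 1 →
      Tendsto (fun n : ℕ =>
          ∫ b in {b : F | abv b ≤ (q : ℝ) ^ n},
            f (!![0, -1; 1, 0] * !![1, b; 0, 1] * !![y, 0; 0, 1]) * ψ (-(α * b)) ∂μ)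
        atTop
        (nhds ((((abv α : ℝ) : ℂ) ^ (2 * s) * ((abv y : ℝ) : ℂ) ^ (1 / 2 + s) -
            (((q : ℝ)) : ℂ) ^ (2 * s) * ((abv y : ℝ) : ℂ) ^ (1 / 2 - s)) *
            (1 - (((q : ℝ)) : ℂ) ^ (-(2 * s) - 1)) / (1 - (((q : ℝ)) : ℂ) ^ (2 * s))))) ∧
    (1 < abv (α * y) →
      Tendsto (fun n : ℕ =>
          ∫ b in {b : F | abv b ≤ (q : ℝ) ^ n},
            f (!![0, -1; 1, 0] * !![1, b; 0, 1] * !![y, 0; 0, 1]) * ψ (-(α * b)) ∂μ)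
        atTop (nhds 0)) := by
  have hna : IsNonarchimedean abv := isNonarchimedean_of_discrete (by exact_mod_cast hq) hdisc
  obtain ⟨p, hp, hψp⟩ := exists_abv_eq_and_ne_one hq hdisc hψtriv hψnt
  obtain ⟨χ, rfl⟩ : ∃ χ : AddChar F ℂ, ⇑χ = ψ := ⟨⟨ψ, hψtriv 0 (by simp), hψadd⟩, rfl⟩
  obtain ⟨k, hk⟩ := hdisc y hy
  obtain ⟨a, ha⟩ : ∃ a : ℤ, abv α = (q : ℝ) ^ (-a) := (neg_surjective.exists).1 (hdisc α hα)
  have hq0 : q ≠ 0 := by lia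
  have hB := isHaarFiltration_zpowBall (hna := hna) hq0 hp hμ1 hμinv hmeas hcoset
  have hf : IsNormalizedSpherical abv s f := ⟨htrans, hK, hone⟩
  have hΦ := hf.isRadial (hna := hna) hq hdisc hk
  have hχ := hasConductor_mulShift (hna := hna) hq0 hψtriv hp hψp (by rwa [abv.map_neg])
  have hαy : abv (α * y) = (q : ℝ) ^ (k - a) := by
    rw [map_mul, ha, hk, ← zpow_add₀ (by positivity), neg_add_eq_sub]
  have hq1 : (1 : ℝ) < q := by exact_mod_cast hq
  simp only [setIntegral_whittaker_eq_zpowBall hna f χ, hαy, zpow_le_one_iff_right₀ hq1,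
    one_lt_zpow_iff_right₀ hq1]
  refine ⟨fun hka => tendsto_const_nhds.congr' ?_, fun hak => tendsto_const_nhds.congr' ?_⟩
  · filter_upwards [eventually_gt_atTop a.toNat] with n hn
    have hZ : (q : ℂ) ^ (2 * s) ≠ 0 := by simp [cpow_eq_zero_iff, hq0]
    rw [hB.setIntegral_radial_mul_addChar hΦ hχ (by lia) hZ (by simpa using hs) (by lia), ha, hk,
      whittaker_formula_eq_zpow (by positivity), ofReal_natCast]
  · filter_upwards [eventually_ge_atTop k.toNat] with n hn
    exact (hB.setIntegral_radial_mul_addChar_eq_zero hΦ hχ (by lia) (by lia)).symm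
end

section
/- Let $F$ be a non-archimedean local field with residue cardinality $q$, and $f_s^{\rm St} \in V_s$ the Steinberg vector, i.e., the unique $\Gamma_0(\mathfrak{p})$-invariant vector with $f_s^{\rm St}(1) = 1$ and $f_s^{\rm St}\big(\begin{pmatrix}0&-1\\1&0\end{pmatrix}\big) = -q^{-1}$. Then for $v(\alpha y) \geq 0$ and $q^{2s}\neq 1$: $(W_s^\alpha f_s^{\rm St})\big(\begin{pmatrix}y&0\\0&1\end{pmatrix}\big) = \frac{(1-q^{-2s-1})|\alpha|^{2s}|y|^{1/2+s} - (1-q^{2s-1})|y|^{1/2-s}}{1 - q^{2s}}$, and the value is $0$ when $v(\alpha y) < 0$. In particular at $s = 1/2$ with $v(\alpha y)\geq 0$, $(W_{1/2}^\alpha f_{1/2}^{\rm St})\big(\begin{pmatrix}y&0\\0&1\end{pmatrix}\big) = -q^{-1}|\alpha y|(1+q^{-1})$. -/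
open Complex Matrix MeasureTheory Filter

/-!
By the Iwasawa decomposition, `b ↦ f (w n(b) diag(y, 1))` is constant on the ball `|b| ≤ |y|` and on
each shell `|b| = |y| q ^ (i + 1)`. The integral of `b ↦ ψ (-α b)` over a ball is the volume of the
ball if the character is trivial on it, and `0` otherwise. Hence the shells beyond
`|b| = |α|⁻¹ q` contribute nothing, and what remains is a geometric sum of length `v(α y)`.
-/

section Nonarchimedean

variable {F : Type*} [Field F] {abv : AbsoluteValue F ℝ} {q : ℝ}

-- `|w + 1|` is within `1` of `|w|`, which for large `|w|` is less than the gap to the next value.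
theorem abv_add_one_eq_of_lt (hq : 1 < q) (hdisc : ∀ x : F, x ≠ 0 → ∃ m : ℤ, abv x = q ^ m)
    {w : F} (hw : q / (q - 1) < abv w) : abv (w + 1) = abv w := by
  have hq0 : 0 < q := by linarith
  have hw' : q < abv w * (q - 1) := (div_lt_iff₀ (by linarith)).mp hw
  have hw1 : 1 < abv w := by nlinarith
  have upper : abv (w + 1) ≤ abv w + 1 := by simpa using abv.add_le w 1
  have lower : abv w ≤ abv (w + 1) + 1 := by simpa using abv.add_le (w + 1) (-1)
  obtain ⟨k, hk⟩ := hdisc w (abv.pos_iff.mp (by linarith))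
  obtain ⟨m, hm⟩ := hdisc (w + 1) (abv.pos_iff.mp (by linarith))
  have gap : ∀ {i j : ℤ}, i < j → q ^ i * q ≤ q ^ j := fun {i j} hij => by
    rw [← zpow_add_one₀ hq0.ne']
    exact zpow_le_zpow_right₀ hq.le hij
  rcases lt_trichotomy m k with h | h | h
  · have := gap h
    rw [← hm, ← hk] at this
    nlinarith
  · rw [hm, hk, h]
  · have := gap h
    rw [← hm, ← hk] at this
    nlinarith

-- If `1 < |n|`, some power `n ^ k` is so large that adding `1` repeatedly never changes its
-- absolute value; but `n ^ (k + 1)` is reached in this way.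
theorem abv_natCast_le_one (hq : 1 < q) (hdisc : ∀ x : F, x ≠ 0 → ∃ m : ℤ, abv x = q ^ m)
    (n : ℕ) : abv n ≤ 1 := by
  by_contra! hn
  obtain ⟨k, hk⟩ := pow_unbounded_of_one_lt (q / (q - 1)) hn
  have add_natCast : ∀ j : ℕ, abv ((n : F) ^ k + j) = abv n ^ k := fun j => by
    induction j with
    | zero => simp
    | succ j ih =>
      rw [Nat.cast_succ, ← add_assoc, abv_add_one_eq_of_lt hq hdisc (by rwa [ih]), ih]
  have hn0 : 0 < n := Nat.pos_of_ne_zero (by rintro rfl; norm_num at hn)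
  obtain ⟨j, hj⟩ := Nat.exists_eq_add_of_le (Nat.pow_le_pow_right hn0 k.le_succ)
  have := add_natCast j
  rw [← Nat.cast_pow, ← Nat.cast_add, ← hj, Nat.cast_pow, map_pow] at this
  exact (pow_lt_pow_right₀ hn k.lt_succ_self).ne' this

theorem isNonarchimedean_of_forall_eq_zpow (hq : 1 < q)
    (hdisc : ∀ x : F, x ≠ 0 → ∃ m : ℤ, abv x = q ^ m) : IsNonarchimedean abv := by
  have : IsUltrametricDist (WithAbs abv) :=
    IsUltrametricDist.isUltrametricDist_of_forall_norm_natCast_le_one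
      (abv_natCast_le_one hq hdisc)
  exact fun x y => IsUltrametricDist.norm_add_le_max (WithAbs.toAbs abv x) (WithAbs.toAbs abv y)

end Nonarchimedean

section Shells

variable {X 𝕜 : Type*} [MeasurableSpace X] [RCLike 𝕜] {μ : Measure X} {B : ℕ → Set X}
  {φ G : X → 𝕜} {C : 𝕜} {c : ℕ → 𝕜}

theorem integrableOn_of_eq_mul_on_shells (hB : Monotone B) (hBm : ∀ n, MeasurableSet (B n))
    (hφ : ∀ n, IntegrableOn φ (B n) μ) (hG₀ : ∀ x ∈ B 0, G x = C * φ x)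
    (hG : ∀ n, ∀ x ∈ B (n + 1) \ B n, G x = c n * φ x) (n : ℕ) : IntegrableOn G (B n) μ := by
  induction n with
  | zero => exact IntegrableOn.congr_fun ((hφ 0).const_mul C) (fun x hx => (hG₀ x hx).symm) (hBm 0)
  | succ n ih =>
    have shell : IntegrableOn G (B (n + 1) \ B n) μ :=
      IntegrableOn.congr_fun (((hφ (n + 1)).mono_set Set.sdiff_subset).const_mul (c n))
        (fun x hx => (hG n x hx).symm) ((hBm _).diff (hBm n))
    simpa only [Set.union_sdiff_cancel (hB n.le_succ)] using ih.union shell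

theorem setIntegral_eq_of_eq_mul_on_shells (hB : Monotone B) (hBm : ∀ n, MeasurableSet (B n))
    (hφ : ∀ n, IntegrableOn φ (B n) μ) (hG₀ : ∀ x ∈ B 0, G x = C * φ x)
    (hG : ∀ n, ∀ x ∈ B (n + 1) \ B n, G x = c n * φ x) (n : ℕ) :
    ∫ x in B n, G x ∂μ = C * ∫ x in B 0, φ x ∂μ +
      ∑ i ∈ Finset.range n, c i * (∫ x in B (i + 1), φ x ∂μ - ∫ x in B i, φ x ∂μ) := by
  induction n with
  | zero => simp [setIntegral_congr_fun (hBm 0) hG₀, integral_const_mul]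
  | succ n ih =>
    have hsub : B n ⊆ B (n + 1) := hB n.le_succ
    have shell : ∫ x in B (n + 1), G x ∂μ - ∫ x in B n, G x ∂μ =
        c n * (∫ x in B (n + 1), φ x ∂μ - ∫ x in B n, φ x ∂μ) := by
      rw [← setIntegral_sdiff (hBm n) (hφ _) hsub, ← integral_const_mul,
        ← setIntegral_congr_fun ((hBm _).diff (hBm n)) (hG n),
        setIntegral_sdiff (hBm n) (integrableOn_of_eq_mul_on_shells hB hBm hφ hG₀ hG _) hsub]
    rw [Finset.sum_range_succ, ← add_assoc, ← ih, ← shell, add_sub_cancel]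

end Shells

section Balls

variable {F : Type*} [Field F] {abv : AbsoluteValue F ℝ} {r R : ℝ} {T : Finset F}

/-- `T` is a system of representatives for the additive cosets of the ball of radius `r` inside the
ball of radius `R`. -/
structure IsBallTransversal (abv : AbsoluteValue F ℝ) (r R : ℝ) (T : Finset F) : Prop where
  ball_eq : {x : F | abv x ≤ R} = ⋃ c ∈ T, {x : F | abv (x - c) ≤ r}
  pairwise : (T : Set F).Pairwise fun c c' => r < abv (c - c')

namespace IsBallTransversal

theorem mem_ball_iff (hT : IsBallTransversal abv r R T) {x : F} :
    abv x ≤ R ↔ ∃ c ∈ T, abv (x - c) ≤ r := by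
  simpa using Set.ext_iff.mp hT.ball_eq x

theorem of_mem_ball_iff (h : ∀ x, abv x ≤ R ↔ ∃ c ∈ T, abv (x - c) ≤ r)
    (hT : (T : Set F).Pairwise fun c c' => r < abv (c - c')) : IsBallTransversal abv r R T :=
  ⟨by ext x; simpa using h x, hT⟩

theorem map_mulLeft (hT : IsBallTransversal abv r R T) {a : F} (ha : a ≠ 0) :
    IsBallTransversal abv (abv a * r) (abv a * R) (T.map ⟨(a * ·), mul_right_injective₀ ha⟩) := by
  have abv_pos : 0 < abv a := abv.pos ha
  refine of_mem_ball_iff (fun x => ?_) ?_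
  · obtain ⟨x, rfl⟩ := (Equiv.mulLeft₀ a ha).surjective x
    simp [← mul_sub, abv_pos, hT.mem_ball_iff]
  · rw [Finset.coe_map, (Function.Embedding.injective _).injOn.pairwise_image]
    exact hT.pairwise.imp fun c c' h => by simpa [Function.onFun, ← mul_sub, abv_pos] using h

theorem map_addRight (hT : IsBallTransversal abv r R T) (hna : IsNonarchimedean abv) {t : F}
    (ht : abv t ≤ R) : IsBallTransversal abv r R (T.map (addRightEmbedding t)) := by
  refine of_mem_ball_iff (fun x => ?_) ?_
  · obtain ⟨x, rfl⟩ := (Equiv.addRight t).surjective x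
    have : abv (x + t) ≤ R ↔ abv x ≤ R :=
      ⟨fun h => by simpa using (hna (x + t) (-t)).trans (max_le h (by rwa [abv.map_neg])),
        fun h => (hna x t).trans (max_le h ht)⟩
    simp [this, hT.mem_ball_iff]
  · rw [Finset.coe_map, (addRightEmbedding t).injective.injOn.pairwise_image]
    exact hT.pairwise.imp fun c c' h => by simpa [Function.onFun] using h

theorem pairwiseDisjoint (hT : IsBallTransversal abv r R T) (hna : IsNonarchimedean abv) :
    (T : Set F).PairwiseDisjoint fun c => {x : F | abv (x - c) ≤ r} := by
  refine fun c hc c' hc' hne => Set.disjoint_left.mpr fun x hx hx' => ?_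
  refine (hT.pairwise hc hc' hne).not_ge ?_
  rw [abv.map_sub c c']
  simpa using (hna (x - c) (-(x - c'))).trans (max_le hx (by rwa [abv.map_neg]))

end IsBallTransversal

variable [MeasurableSpace F] {μ : Measure F}

/-- `μ` behaves on balls like the Haar measure of `F` giving the unit ball volume `1`.
Invariance is a condition on preimages because translations of `F` are not assumed measurable. -/
structure IsNormalizedHaar (abv : AbsoluteValue F ℝ) (μ : Measure F) : Prop where
  measure_unitBall : μ {x : F | abv x ≤ 1} = 1
  measure_preimage_add : ∀ (t : F) (s : Set F), μ ((t + ·) ⁻¹' s) = μ s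
  measurableSet_ball : ∀ (c : F) (r : ℝ), MeasurableSet {x : F | abv (x - c) ≤ r}

theorem IsNormalizedHaar.measurableSet_ball_zero (hμ : IsNormalizedHaar abv μ) (r : ℝ) :
    MeasurableSet {x : F | abv x ≤ r} := by
  simpa using hμ.measurableSet_ball 0 r

theorem IsNormalizedHaar.measure_ball (hμ : IsNormalizedHaar abv μ) (c : F) (r : ℝ) :
    μ {x : F | abv (x - c) ≤ r} = μ {x : F | abv x ≤ r} := by
  simpa [neg_add_eq_sub] using hμ.measure_preimage_add (-c) {x : F | abv x ≤ r}

namespace IsBallTransversal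

variable {E : Type*} [NormedAddCommGroup E] {g : F → E}

theorem measure_ball (hT : IsBallTransversal abv r R T) (hna : IsNonarchimedean abv)
    (hμ : IsNormalizedHaar abv μ) : μ {x : F | abv x ≤ R} = T.card * μ {x : F | abv x ≤ r} := by
  rw [hT.ball_eq, measure_biUnion_finset (hT.pairwiseDisjoint hna)
    fun c _ => hμ.measurableSet_ball c r]
  simp [hμ.measure_ball]

theorem integrableOn (hT : IsBallTransversal abv r R T) (hμ : IsNormalizedHaar abv μ)
    (hr : μ {x : F | abv x ≤ r} ≠ ⊤) (hg : ∀ x y, abv (x - y) ≤ r → g x = g y) :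
    IntegrableOn g {x : F | abv x ≤ R} μ := by
  rw [hT.ball_eq]
  refine integrableOn_finset_iUnion.mpr fun c _ => ?_
  have hconst : IntegrableOn (fun _ => g c) {x : F | abv (x - c) ≤ r} μ :=
    integrableOn_const (by rwa [hμ.measure_ball])
  exact hconst.congr_fun (fun x hx => (hg x c hx).symm) (hμ.measurableSet_ball c r)

theorem setIntegral_eq_sum [NormedSpace ℝ E] [CompleteSpace E] (hT : IsBallTransversal abv r R T)
    (hna : IsNonarchimedean abv) (hμ : IsNormalizedHaar abv μ) (hr : μ {x : F | abv x ≤ r} ≠ ⊤)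
    (hg : ∀ x y, abv (x - y) ≤ r → g x = g y) :
    ∫ x in {x : F | abv x ≤ R}, g x ∂μ = ∑ c ∈ T, μ.real {x : F | abv x ≤ r} • g c := by
  have hint := hT.integrableOn hμ hr hg
  rw [hT.ball_eq] at hint ⊢
  rw [integral_biUnion_finset T (fun c _ => hμ.measurableSet_ball c r)
    (hT.pairwiseDisjoint hna) (integrableOn_finset_iUnion.mp hint)]
  refine Finset.sum_congr rfl fun c _ => ?_
  rw [setIntegral_congr_fun (g := fun _ => g c) (hμ.measurableSet_ball c r) fun x => hg x c,
    setIntegral_const, Measure.real, hμ.measure_ball, Measure.real]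

-- The translation is applied to the coset representatives, not to the integral, because it is not
-- assumed to be measurable.
theorem setIntegral_add_right [NormedSpace ℝ E] [CompleteSpace E] (hT : IsBallTransversal abv r R T)
    (hna : IsNonarchimedean abv) (hμ : IsNormalizedHaar abv μ) (hr : μ {x : F | abv x ≤ r} ≠ ⊤)
    (hg : ∀ x y, abv (x - y) ≤ r → g x = g y) {t : F} (ht : abv t ≤ R) :
    ∫ x in {x : F | abv x ≤ R}, g (x + t) ∂μ = ∫ x in {x : F | abv x ≤ R}, g x ∂μ := by
  have hgt : ∀ x y, abv (x - y) ≤ r → g (x + t) = g (y + t) := fun x y h =>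
    hg _ _ (by rwa [add_sub_add_right_eq_sub])
  rw [hT.setIntegral_eq_sum hna hμ hr hgt, (hT.map_addRight hna ht).setIntegral_eq_sum hna hμ hr hg,
    Finset.sum_map]
  rfl

theorem setIntegral_addChar_eq_zero (hT : IsBallTransversal abv r R T)
    (hna : IsNonarchimedean abv) (hμ : IsNormalizedHaar abv μ) (hr : μ {x : F | abv x ≤ r} ≠ ⊤)
    {χ : AddChar F ℂ} (hχ : ∀ x y, abv (x - y) ≤ r → χ x = χ y) {t : F} (ht : abv t ≤ R)
    (hχt : χ t ≠ 1) : ∫ x in {x : F | abv x ≤ R}, χ x ∂μ = 0 := by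
  have hshift := hT.setIntegral_add_right hna hμ hr hχ ht
  simp only [χ.map_add_eq_mul, integral_mul_const] at hshift
  by_contra h0
  exact hχt (mul_left_cancel₀ h0 (hshift.trans (mul_one _).symm))

end IsBallTransversal

end Balls

section LocalField

variable {F : Type*} [Field F] {abv : AbsoluteValue F ℝ} {q : ℕ}

/-- `abv` is the normalized absolute value of a non-archimedean local field with residue field of
cardinality `q`: its value group is `q ^ ℤ`, and `q ^ n` is the index of the ring of integers in
the ball of radius `q ^ n`. -/
structure IsNormalizedAbv (abv : AbsoluteValue F ℝ) (q : ℕ) : Prop where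
  one_lt : 1 < q
  exists_zpow : ∀ x : F, x ≠ 0 → ∃ m : ℤ, abv x = (q : ℝ) ^ m
  exists_transversal : ∀ n : ℕ, ∃ T : Finset F, T.card = q ^ n ∧
    IsBallTransversal abv 1 ((q : ℝ) ^ n) T

/-- `ψ` is trivial on the ring of integers but not on the next larger fractional ideal. -/
structure IsUnramified (abv : AbsoluteValue F ℝ) (q : ℕ) (ψ : AddChar F ℂ) : Prop where
  eq_one : ∀ x : F, abv x ≤ 1 → ψ x = 1
  exists_ne_one : ∃ x : F, abv x ≤ (q : ℝ) ∧ ψ x ≠ 1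

namespace IsNormalizedAbv

theorem one_lt_cast (hv : IsNormalizedAbv abv q) : (1 : ℝ) < q := mod_cast hv.one_lt

theorem cast_pos (hv : IsNormalizedAbv abv q) : (0 : ℝ) < q := zero_lt_one.trans hv.one_lt_cast

theorem isNonarchimedean (hv : IsNormalizedAbv abv q) : IsNonarchimedean abv :=
  isNonarchimedean_of_forall_eq_zpow hv.one_lt_cast hv.exists_zpow

theorem exists_eq_mul_pow (hv : IsNormalizedAbv abv q) {a b : F} (hb : b ≠ 0)
    (hab : abv b ≤ abv a) : ∃ n : ℕ, abv a = abv b * (q : ℝ) ^ n := by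
  have hb' : 0 < abv b := abv.pos hb
  obtain ⟨m, hm⟩ := hv.exists_zpow (a / b)
    (div_ne_zero (abv.pos_iff.mp (hb'.trans_le hab)) hb)
  have hm0 : 0 ≤ m := by
    rw [← zpow_le_zpow_iff_right₀ hv.one_lt_cast, zpow_zero, ← hm, map_div₀]
    exact (one_le_div hb').mpr hab
  obtain ⟨n, rfl⟩ := Int.eq_ofNat_of_zero_le hm0
  exact ⟨n, by rw [← zpow_natCast, ← hm, map_div₀, mul_div_cancel₀ _ hb'.ne']⟩

theorem mul_le_of_lt (hv : IsNormalizedAbv abv q) {a b : F} (hb : b ≠ 0)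
    (hlt : abv b < abv a) : abv b * q ≤ abv a := by
  obtain ⟨n, hn⟩ := hv.exists_eq_mul_pow hb hlt.le
  have hn0 : n ≠ 0 := by
    rintro rfl
    simp [hn] at hlt
  rw [hn]
  exact mul_le_mul_of_nonneg_left (le_self_pow₀ hv.one_lt_cast.le hn0) (abv.nonneg b)

theorem exists_transversal_of_le (hv : IsNormalizedAbv abv q) {a b : F} (hb : b ≠ 0)
    (hab : abv b ≤ abv a) :
    ∃ T : Finset F, IsBallTransversal abv (abv b) (abv a) T ∧ abv a = T.card * abv b := by
  obtain ⟨n, hn⟩ := hv.exists_eq_mul_pow hb hab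
  obtain ⟨T, hcard, hT⟩ := hv.exists_transversal n
  refine ⟨_, by simpa [hn] using hT.map_mulLeft hb, ?_⟩
  rw [Finset.card_map, hcard, hn, Nat.cast_pow, mul_comm]

variable {y p : F}

theorem ne_zero_of_abv_eq (hv : IsNormalizedAbv abv q) (hp : abv p = q) : p ≠ 0 :=
  abv.pos_iff.mp (hp ▸ hv.cast_pos)

theorem monotone_abv_mul_pow (hv : IsNormalizedAbv abv q) (hp : abv p = q) (y : F) :
    Monotone fun i : ℕ => abv (y * p ^ i) := by
  simp only [abv.map_mul, abv.map_pow, hp]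
  exact (pow_right_mono₀ hv.one_lt_cast.le).const_mul (abv.nonneg y)

theorem abv_eq_of_lt_of_le (hv : IsNormalizedAbv abv q) (hp : abv p = q) (hy : y ≠ 0) {b : F}
    {i : ℕ} (hlt : abv (y * p ^ i) < abv b) (hle : abv b ≤ abv (y * p ^ (i + 1))) :
    abv b = abv y * (q : ℝ) ^ (i + 1) := by
  have hstep := hv.mul_le_of_lt (mul_ne_zero hy (pow_ne_zero i (hv.ne_zero_of_abv_eq hp))) hlt
  simp only [abv.map_mul, abv.map_pow, hp] at hle hstep
  exact hle.antisymm (by rwa [pow_succ, ← mul_assoc])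

theorem tendsto_of_forall_lt {E : Type*} [TopologicalSpace E] {Φ : ℝ → E} {L : E} {N : ℕ}
    (hv : IsNormalizedAbv abv q) (hp : abv p = q) (hy : y ≠ 0)
    (hΦ : ∀ n, N < n → Φ (abv (y * p ^ n)) = L) :
    Tendsto (fun n : ℕ => Φ ((q : ℝ) ^ n)) atTop (nhds L) := by
  have hp0 : p ≠ 0 := hv.ne_zero_of_abv_eq hp
  refine tendsto_const_nhds.congr' ?_
  filter_upwards [(tendsto_pow_atTop_atTop_of_one_lt hv.one_lt_cast).eventually_ge_atTop
    (abv (y * p ^ (N + 1)))] with n hn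
  rw [← hp, ← abv.map_pow] at hn ⊢
  obtain ⟨m, hm⟩ := hv.exists_eq_mul_pow (mul_ne_zero hy (pow_ne_zero _ hp0)) hn
  rw [hm, ← hp, ← abv.map_pow, ← abv.map_mul, mul_assoc, ← pow_add, hΦ _ (by omega)]

variable [MeasurableSpace F] {μ : Measure F}

theorem measure_ball_abv (hv : IsNormalizedAbv abv q) (hμ : IsNormalizedHaar abv μ) {a : F}
    (ha : a ≠ 0) : μ {x : F | abv x ≤ abv a} = ENNReal.ofReal (abv a) := by
  have ha' : 0 < abv a := abv.pos ha
  have one_eq : μ {x : F | abv x ≤ abv 1} = 1 := by rw [abv.map_one, hμ.measure_unitBall]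
  rcases le_total (abv a) (abv 1) with h | h
  · obtain ⟨T, hT, hcard⟩ := hv.exists_transversal_of_le ha h
    have hmul := hT.measure_ball hv.isNonarchimedean hμ
    have ha_inv : abv a = (T.card : ℝ)⁻¹ := eq_inv_of_mul_eq_one_right (by rw [← hcard, map_one])
    have hcard_pos : (0 : ℝ) < T.card := by rwa [ha_inv, inv_pos] at ha'
    rw [one_eq, mul_comm] at hmul
    rw [ENNReal.eq_inv_of_mul_eq_one_left hmul.symm, ha_inv, ENNReal.ofReal_inv_of_pos hcard_pos,
      ENNReal.ofReal_natCast]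
  · obtain ⟨T, hT, hcard⟩ := hv.exists_transversal_of_le one_ne_zero h
    rw [hT.measure_ball hv.isNonarchimedean hμ, one_eq, hcard, abv.map_one, mul_one, mul_one,
      ENNReal.ofReal_natCast]

end IsNormalizedAbv

namespace IsUnramified

variable {ψ : AddChar F ℂ}

theorem exists_abv_eq (hψ : IsUnramified abv q ψ) (hv : IsNormalizedAbv abv q) :
    ∃ p : F, abv p = q ∧ ψ p ≠ 1 := by
  obtain ⟨p, hle, hp⟩ := hψ.exists_ne_one
  have hlt : abv 1 < abv p := by
    rw [abv.map_one]
    exact not_le.mp fun h => hp (hψ.eq_one p h)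
  exact ⟨p, hle.antisymm (by simpa using hv.mul_le_of_lt one_ne_zero hlt), hp⟩

theorem mulShift_eq (hψ : IsUnramified abv q ψ) {c : F} {r : ℝ} (hr : abv c * r ≤ 1) {x y : F}
    (hxy : abv (x - y) ≤ r) : ψ.mulShift c x = ψ.mulShift c y := by
  have htriv : ψ (c * (x - y)) = 1 := hψ.eq_one _ <| by
    rw [abv.map_mul]
    exact (mul_le_mul_of_nonneg_left hxy (abv.nonneg c)).trans hr
  rw [← sub_add_cancel x y, AddChar.map_add_eq_mul, AddChar.mulShift_apply, htriv, one_mul]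

variable [MeasurableSpace F] {μ : Measure F} {a c : F}

theorem integrableOn_mulShift (hψ : IsUnramified abv q ψ) (hv : IsNormalizedAbv abv q)
    (hμ : IsNormalizedHaar abv μ) (hc : c ≠ 0) (ha : a ≠ 0) :
    IntegrableOn (ψ.mulShift c) {x : F | abv x ≤ abv a} μ := by
  obtain ⟨b, hb, hba, hcb⟩ : ∃ b : F, b ≠ 0 ∧ abv b ≤ abv a ∧ abv c * abv b ≤ 1 := by
    rcases le_total (abv a) (abv c⁻¹) with h | h
    · refine ⟨a, ha, le_rfl, ?_⟩
      rwa [map_inv₀, ← one_div, le_div_iff₀' (abv.pos hc)] at h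
    · exact ⟨c⁻¹, inv_ne_zero hc, h, by rw [← abv.map_mul, mul_inv_cancel₀ hc, map_one]⟩
  obtain ⟨T, hT, -⟩ := hv.exists_transversal_of_le hb hba
  exact hT.integrableOn hμ (hv.measure_ball_abv hμ hb ▸ ENNReal.ofReal_ne_top)
    fun x y => hψ.mulShift_eq hcb

theorem setIntegral_mulShift_of_le_one (hψ : IsUnramified abv q ψ) (hv : IsNormalizedAbv abv q)
    (hμ : IsNormalizedHaar abv μ) (ha : a ≠ 0) (hca : abv (c * a) ≤ 1) :
    ∫ x in {x : F | abv x ≤ abv a}, ψ.mulShift c x ∂μ = (abv a : ℂ) := by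
  have hone : Set.EqOn (ψ.mulShift c) (fun _ => 1) {x : F | abv x ≤ abv a} := fun x hx => by
    rw [hψ.mulShift_eq (y := 0) (abv.map_mul c a ▸ hca) (by simpa using hx),
      AddChar.map_zero_eq_one]
  rw [setIntegral_congr_fun (hμ.measurableSet_ball_zero _) hone, setIntegral_const, Measure.real,
    hv.measure_ball_abv hμ ha, ENNReal.toReal_ofReal (abv.nonneg a)]
  simp

theorem setIntegral_mulShift_of_one_lt (hψ : IsUnramified abv q ψ) (hv : IsNormalizedAbv abv q)
    (hμ : IsNormalizedHaar abv μ) (hca : 1 < abv (c * a)) :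
    ∫ x in {x : F | abv x ≤ abv a}, ψ.mulShift c x ∂μ = 0 := by
  obtain ⟨p, hp, hψp⟩ := hψ.exists_abv_eq hv
  have hc : c ≠ 0 := by
    rintro rfl
    norm_num at hca
  have hc' : 0 < abv c := abv.pos hc
  have hinv : abv c⁻¹ < abv a := by
    rwa [map_inv₀, inv_lt_iff_one_lt_mul₀' hc', ← abv.map_mul]
  obtain ⟨T, hT, -⟩ := hv.exists_transversal_of_le (inv_ne_zero hc) hinv.le
  have hpa : abv (c⁻¹ * p) ≤ abv a := by
    rw [abv.map_mul, hp]
    exact hv.mul_le_of_lt (inv_ne_zero hc) hinv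
  refine hT.setIntegral_addChar_eq_zero hv.isNonarchimedean hμ
    (hv.measure_ball_abv hμ (inv_ne_zero hc) ▸ ENNReal.ofReal_ne_top)
    (fun x y => hψ.mulShift_eq (by rw [← abv.map_mul, mul_inv_cancel₀ hc, map_one])) hpa ?_
  rwa [AddChar.mulShift_apply, mul_inv_cancel_left₀ hc]

end IsUnramified

end LocalField

section SteinbergSum

variable {K : Type*} [Field K]

/-- The value of the Whittaker function divided by `|y| ^ (1 / 2 - s)`, where `x = q⁻¹`,
`t = q ^ (-2 * s)` and `N = v(α * y)`; the `i`-th term of the sum comes from the shell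
`|b| = |y| * q ^ (i + 1)`, the last term from the shell on which the character is first
nontrivial. -/
def steinbergSum (x t : K) (N : ℕ) : K :=
  -x + (1 - x) * ∑ i ∈ Finset.range N, t ^ (i + 1) - x * t ^ (N + 1)

theorem steinbergSum_succ (x t : K) (N : ℕ) :
    steinbergSum x t (N + 1) = steinbergSum x t N + t ^ (N + 1) * (1 - x * t) := by
  simp only [steinbergSum, Finset.sum_range_succ]
  ring

theorem steinbergSum_eq_div (x : K) {t : K} (ht0 : t ≠ 0) (ht1 : t⁻¹ ≠ 1) (N : ℕ) :
    steinbergSum x t N = ((1 - t * x) * t ^ N - (1 - t⁻¹ * x)) / (1 - t⁻¹) := by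
  have hden : 1 - t⁻¹ ≠ 0 := sub_ne_zero.mpr ht1.symm
  rw [eq_div_iff hden]
  induction N with
  | zero =>
    simp only [steinbergSum, Finset.range_zero, Finset.sum_empty]
    field_simp
    ring
  | succ N ih =>
    rw [steinbergSum_succ, add_mul, ih]
    field_simp
    ring

theorem steinbergSum_self (x : K) (N : ℕ) : steinbergSum x x N = -x * x ^ N * (1 + x) := by
  induction N with
  | zero =>
    simp only [steinbergSum, Finset.range_zero, Finset.sum_empty]
    ring
  | succ N ih =>
    rw [steinbergSum_succ, ih]
    ring

theorem sum_mul_sub_eq_of_eq_zero {J : ℕ → K} {N n : ℕ} (hJ : ∀ i, N < i → J i = 0) (hn : N < n)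
    (c : ℕ → K) :
    ∑ i ∈ Finset.range n, c i * (J (i + 1) - J i) =
      ∑ i ∈ Finset.range N, c i * (J (i + 1) - J i) - c N * J N := by
  induction n, hn using Nat.le_induction with
  | base =>
    rw [Finset.sum_range_succ, hJ _ N.lt_succ_self]
    ring
  | succ n hn ih =>
    rw [Finset.sum_range_succ, ih, hJ n hn, hJ (n + 1) (by omega)]
    ring

theorem shellSum_eq_steinbergSum {q : K} (hq : q ≠ 0) (t r : K) {J : ℕ → K} {N n : ℕ}
    (hJ : ∀ i ≤ N, J i = r * q ^ i) (hJ₀ : ∀ i, N < i → J i = 0) (hn : N < n) :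
    -q⁻¹ * J 0 + ∑ i ∈ Finset.range n, (q⁻¹ * t) ^ (i + 1) * (J (i + 1) - J i) =
      r * steinbergSum q⁻¹ t N := by
  have shell : ∀ i ∈ Finset.range N,
      (q⁻¹ * t) ^ (i + 1) * (J (i + 1) - J i) = r * (1 - q⁻¹) * t ^ (i + 1) := fun i hi => by
    have hi := Finset.mem_range.mp hi
    rw [hJ _ hi, hJ _ hi.le, mul_pow, inv_pow]
    field_simp
    ring
  rw [sum_mul_sub_eq_of_eq_zero hJ₀ hn, Finset.sum_congr rfl shell, ← Finset.mul_sum,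
    hJ 0 N.zero_le, hJ N le_rfl, steinbergSum, mul_pow, inv_pow]
  field_simp
  ring

end SteinbergSum

section CPow

variable {r : ℝ} {q : ℕ}

theorem natCast_pow_cpow (q k : ℕ) (w : ℂ) : (((q : ℝ) ^ k : ℝ) : ℂ) ^ w = ((q : ℂ) ^ w) ^ k := by
  rw [ofReal_pow, ofReal_natCast, ← natCast_cpow_natCast_mul, cpow_nat_mul]

theorem ofReal_inv_cpow (hr : 0 < r) (w : ℂ) : ((r⁻¹ : ℝ) : ℂ) ^ w = (r : ℂ) ^ (-w) := by
  rw [ofReal_inv, inv_cpow_ofReal_nonneg hr.le, cpow_neg]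

theorem ofReal_div_mul_pow_sq_cpow (hr : 0 < r) (hq : q ≠ 0) (s : ℂ) (k : ℕ) :
    ((r / (r * (q : ℝ) ^ k) ^ 2 : ℝ) : ℂ) ^ (s + 1 / 2) =
      (r : ℂ) ^ (-(s + 1 / 2)) * ((q : ℂ)⁻¹ * (q : ℂ) ^ (-(2 * s))) ^ k := by
  have hq' : (q : ℂ) ≠ 0 := Nat.cast_ne_zero.mpr hq
  have hreal : r / (r * (q : ℝ) ^ k) ^ 2 = r⁻¹ * ((q : ℝ) ^ (k * 2))⁻¹ := by
    rw [pow_mul]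
    field_simp
  have hbase : ((q : ℂ) ^ (-(s + 1 / 2))) ^ 2 = (q : ℂ)⁻¹ * (q : ℂ) ^ (-(2 * s)) := by
    rw [← cpow_nat_mul, ← cpow_neg_one, ← cpow_add _ _ hq']
    congr 1
    push_cast
    ring
  rw [hreal, ofReal_mul, mul_cpow_ofReal_nonneg (by positivity) (by positivity),
    ofReal_inv_cpow hr, ofReal_inv_cpow (by positivity), natCast_pow_cpow, mul_comm k, pow_mul,
    hbase]

theorem ofReal_cpow_mul_steinbergSum {a : ℝ} (ha : 0 < a) (hr : 0 < r) {s : ℂ}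
    (hs : (q : ℂ) ^ (2 * s) ≠ 1) {N : ℕ} (hN : a * r * (q : ℝ) ^ N = 1) (hq : q ≠ 0) :
    (r : ℂ) ^ (1 / 2 - s) * steinbergSum (q : ℂ)⁻¹ ((q : ℂ) ^ (-(2 * s))) N =
      ((1 - (q : ℂ) ^ (-(2 * s) - 1)) * (a : ℂ) ^ (2 * s) * (r : ℂ) ^ (1 / 2 + s) -
        (1 - (q : ℂ) ^ (2 * s - 1)) * (r : ℂ) ^ (1 / 2 - s)) / (1 - (q : ℂ) ^ (2 * s)) := by
  have hq' : (q : ℂ) ≠ 0 := Nat.cast_ne_zero.mpr hq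
  have hr' : (r : ℂ) ≠ 0 := ofReal_ne_zero.mpr hr.ne'
  have har : (a : ℂ) ^ (2 * s) * (r : ℂ) ^ (2 * s) = ((q : ℂ) ^ (-(2 * s))) ^ N := by
    rw [← mul_cpow_ofReal_nonneg ha.le hr.le, ← ofReal_mul, eq_inv_of_mul_eq_one_left hN,
      ofReal_inv_cpow (by positivity), natCast_pow_cpow]
  have hry : (r : ℂ) ^ (1 / 2 + s) = (r : ℂ) ^ (2 * s) * (r : ℂ) ^ (1 / 2 - s) := by
    rw [← cpow_add _ _ hr']
    ring_nf
  have hinv : ((q : ℂ) ^ (-(2 * s)))⁻¹ = (q : ℂ) ^ (2 * s) := by rw [cpow_neg, inv_inv]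
  rw [steinbergSum_eq_div _ (by simp [cpow_eq_zero_iff, hq']) (by rwa [hinv]), hinv, ← har, hry,
    cpow_sub _ _ hq', cpow_sub _ _ hq', cpow_one]
  ring

theorem ofReal_cpow_mul_steinbergSum_one_half {v : ℝ} {N : ℕ} (hN : v * (q : ℝ) ^ N = 1) :
    (r : ℂ) ^ (1 / 2 - 1 / 2 : ℂ) * steinbergSum (q : ℂ)⁻¹ ((q : ℂ) ^ (-(2 * (1 / 2)) : ℂ)) N =
      -(q : ℂ)⁻¹ * v * (1 + (q : ℂ)⁻¹) := by
  rw [sub_self, cpow_zero, one_mul, mul_one_div_cancel two_ne_zero, cpow_neg_one,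
    steinbergSum_self, eq_inv_of_mul_eq_one_left hN, ofReal_inv, ofReal_pow, ofReal_natCast,
    inv_pow]

end CPow

section Steinberg

variable {F : Type*} [Field F] {abv : AbsoluteValue F ℝ} {q : ℕ} {s : ℂ}
  {f : Matrix (Fin 2) (Fin 2) F → ℂ}

/-- `f` is the vector `f_s^St` of the principal series `V_s`. The matrices `κ` in `mul_gamma`
are those of `Γ₀(𝔭)`, as `𝔭` is the ball of radius `q⁻¹`. -/
structure IsSteinbergVector (abv : AbsoluteValue F ℝ) (q : ℕ) (s : ℂ)
    (f : Matrix (Fin 2) (Fin 2) F → ℂ) : Prop where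
  borel_mul : ∀ (a d : F), a ≠ 0 → d ≠ 0 → ∀ (b : F) (g : Matrix (Fin 2) (Fin 2) F),
    f (!![a, b; 0, d] * g) = ((abv (a * d⁻¹) : ℝ) : ℂ) ^ (s + 1 / 2) * f g
  mul_gamma : ∀ (g κ : Matrix (Fin 2) (Fin 2) F),
    abv (κ 0 0) ≤ 1 → abv (κ 0 1) ≤ 1 → abv (κ 1 0) ≤ (q : ℝ)⁻¹ → abv (κ 1 1) ≤ 1 →
    abv κ.det = 1 → f (g * κ) = f g
  apply_one : f 1 = 1
  apply_weyl : f !![0, -1; 1, 0] = -(q : ℂ)⁻¹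

namespace IsSteinbergVector

variable {b y : F}

theorem apply_of_abv_le (hf : IsSteinbergVector abv q s f) (hy : y ≠ 0) (hb : abv b ≤ abv y) :
    f (!![0, -1; 1, 0] * !![1, b; 0, 1] * !![y, 0; 0, 1]) =
      (abv y : ℂ) ^ (-(s + 1 / 2)) * -(q : ℂ)⁻¹ := by
  have iwasawa : !![0, -1; 1, 0] * !![1, b; 0, 1] * !![y, 0; 0, 1] =
      !![1, 0; 0, y] * (!![0, -1; 1, 0] * !![1, b / y; 0, 1]) := by
    simp [mul_div_cancel₀ b hy]
  have hby : abv (b / y) ≤ 1 := by rwa [map_div₀, div_le_one (abv.pos hy)]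
  have hΓ : f (!![0, -1; 1, 0] * !![1, b / y; 0, 1]) = f !![0, -1; 1, 0] :=
    hf.mul_gamma _ _ (by simp) (by simpa using hby) (by simp) (by simp) (by simp [det_fin_two])
  rw [iwasawa, hf.borel_mul 1 y one_ne_zero hy, hΓ, hf.apply_weyl, one_mul, map_inv₀,
    ofReal_inv_cpow (abv.pos hy)]

theorem apply_of_mul_le_abv (hf : IsSteinbergVector abv q s f) (hq : q ≠ 0) (hy : y ≠ 0)
    (hb : abv y * q ≤ abv b) :
    f (!![0, -1; 1, 0] * !![1, b; 0, 1] * !![y, 0; 0, 1]) =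
      ((abv y / abv b ^ 2 : ℝ) : ℂ) ^ (s + 1 / 2) := by
  have hq' : (0 : ℝ) < q := by positivity
  have hb0 : b ≠ 0 := abv.pos_iff.mp ((mul_pos (abv.pos hy) hq').trans_le hb)
  have iwasawa : !![0, -1; 1, 0] * !![1, b; 0, 1] * !![y, 0; 0, 1] =
      !![y / b, -1; 0, b] * (1 * !![1, 0; y / b, 1]) := by
    simp [mul_div_cancel₀ y hb0]
  have hyb : abv (y / b) ≤ (q : ℝ)⁻¹ := by
    rwa [map_div₀, div_le_iff₀ (abv.pos hb0), inv_mul_eq_div, le_div_iff₀ hq']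
  have hΓ : f (1 * !![1, 0; y / b, 1]) = f 1 :=
    hf.mul_gamma _ _ (by simp) (by simp) (by simpa using hyb) (by simp) (by simp [det_fin_two])
  rw [iwasawa, hf.borel_mul _ _ (div_ne_zero hy hb0) hb0, hΓ, hf.apply_one, mul_one, abv.map_mul,
    map_div₀, map_inv₀, ← div_eq_mul_inv, div_div, ← sq]

end IsSteinbergVector

end Steinberg

section Whittaker

variable {F : Type*} [Field F] [MeasurableSpace F] {abv : AbsoluteValue F ℝ} {q : ℕ}
  {μ : Measure F} {ψ : AddChar F ℂ} {s : ℂ} {f : Matrix (Fin 2) (Fin 2) F → ℂ} {α y p : F}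

/-- The Whittaker integral `(W^α f)(diag(y, 1))` cut off at `|b| ≤ R`; the value of the stabilizing
integral is its limit as `R → ∞`. -/
noncomputable def truncatedWhittaker (abv : AbsoluteValue F ℝ) (μ : Measure F)
    (f : Matrix (Fin 2) (Fin 2) F → ℂ) (ψ : AddChar F ℂ) (α y : F) (R : ℝ) : ℂ :=
  ∫ b in {b : F | abv b ≤ R},
    f (!![0, -1; 1, 0] * !![1, b; 0, 1] * !![y, 0; 0, 1]) * ψ (-(α * b)) ∂μ

theorem truncatedWhittaker_eq_sum (hv : IsNormalizedAbv abv q) (hμ : IsNormalizedHaar abv μ)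
    (hψ : IsUnramified abv q ψ) (hf : IsSteinbergVector abv q s f) (hp : abv p = q) (hα : α ≠ 0)
    (hy : y ≠ 0) {J : ℕ → ℂ}
    (hJ : ∀ i, ∫ b in {b : F | abv b ≤ abv (y * p ^ i)}, ψ.mulShift (-α) b ∂μ = J i) (n : ℕ) :
    truncatedWhittaker abv μ f ψ α y (abv (y * p ^ n)) = (abv y : ℂ) ^ (-(s + 1 / 2)) *
      (-(q : ℂ)⁻¹ * J 0 + ∑ i ∈ Finset.range n,
        ((q : ℂ)⁻¹ * (q : ℂ) ^ (-(2 * s))) ^ (i + 1) * (J (i + 1) - J i)) := by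
  have hq0 : q ≠ 0 := (zero_lt_one.trans hv.one_lt).ne'
  have hp0 : p ≠ 0 := hv.ne_zero_of_abv_eq hp
  have hyp : ∀ i, y * p ^ i ≠ 0 := fun i => mul_ne_zero hy (pow_ne_zero i hp0)
  rw [truncatedWhittaker, setIntegral_eq_of_eq_mul_on_shells
    (B := fun i => {b : F | abv b ≤ abv (y * p ^ i)})
    (fun _ _ hij _ => (hv.monotone_abv_mul_pow hp y hij).trans')
    (fun i => hμ.measurableSet_ball_zero _)
    (fun i => hψ.integrableOn_mulShift hv hμ (neg_ne_zero.mpr hα) (hyp i))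
    (C := (abv y : ℂ) ^ (-(s + 1 / 2)) * -(q : ℂ)⁻¹)
    (c := fun i => (abv y : ℂ) ^ (-(s + 1 / 2)) * ((q : ℂ)⁻¹ * (q : ℂ) ^ (-(2 * s))) ^ (i + 1))]
  · simp only [hJ, mul_add, Finset.mul_sum, mul_assoc]
  · intro b hb
    rw [hf.apply_of_abv_le hy (by simpa using hb), AddChar.mulShift_apply, neg_mul]
  · rintro i b ⟨hle, hlt⟩
    have hb := hv.abv_eq_of_lt_of_le hp hy (not_le.mp hlt) hle
    have hyb : abv y * q ≤ abv b := by
      rw [hb]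
      gcongr
      exact le_self_pow₀ hv.one_lt_cast.le i.succ_ne_zero
    rw [hf.apply_of_mul_le_abv hq0 hy hyb, hb,
      ofReal_div_mul_pow_sq_cpow (abv.pos hy) hq0, AddChar.mulShift_apply, neg_mul]

theorem truncatedWhittaker_eq_zero (hv : IsNormalizedAbv abv q) (hμ : IsNormalizedHaar abv μ)
    (hψ : IsUnramified abv q ψ) (hf : IsSteinbergVector abv q s f) (hp : abv p = q)
    (hαy : 1 < abv (α * y)) (n : ℕ) :
    truncatedWhittaker abv μ f ψ α y (abv (y * p ^ n)) = 0 := by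
  obtain ⟨hα, hy⟩ := mul_ne_zero_iff.mp (abv.pos_iff.mp (zero_lt_one.trans hαy))
  have hJ : ∀ i, ∫ b in {b : F | abv b ≤ abv (y * p ^ i)}, ψ.mulShift (-α) b ∂μ = 0 := fun i => by
    refine hψ.setIntegral_mulShift_of_one_lt hv hμ ?_
    rw [neg_mul, abv.map_neg, ← mul_assoc, abv.map_mul, abv.map_pow, hp]
    exact one_lt_mul_of_lt_of_le hαy (one_le_pow₀ hv.one_lt_cast.le)
  rw [truncatedWhittaker_eq_sum hv hμ hψ hf hp hα hy hJ]
  simp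

theorem truncatedWhittaker_eq_steinbergSum (hv : IsNormalizedAbv abv q)
    (hμ : IsNormalizedHaar abv μ) (hψ : IsUnramified abv q ψ) (hf : IsSteinbergVector abv q s f)
    (hp : abv p = q) {N n : ℕ} (hN : abv (α * y) * (q : ℝ) ^ N = 1) (hn : N < n) :
    truncatedWhittaker abv μ f ψ α y (abv (y * p ^ n)) =
      (abv y : ℂ) ^ (1 / 2 - s) * steinbergSum (q : ℂ)⁻¹ ((q : ℂ) ^ (-(2 * s))) N := by
  obtain ⟨hα, hy⟩ : α ≠ 0 ∧ y ≠ 0 := by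
    rw [← mul_ne_zero_iff, ← abv.ne_zero_iff]
    exact left_ne_zero_of_mul_eq_one hN
  have hq := hv.one_lt_cast
  have hq0 : (q : ℂ) ≠ 0 := mod_cast hv.cast_pos.ne'
  have hy' : (abv y : ℂ) ≠ 0 := ofReal_ne_zero.mpr (abv.ne_zero hy)
  have hp0 : p ≠ 0 := hv.ne_zero_of_abv_eq hp
  have hαyp : ∀ i, abv (-α * (y * p ^ i)) = abv (α * y) * (q : ℝ) ^ i := fun i => by
    rw [neg_mul, abv.map_neg, ← mul_assoc, abv.map_mul, abv.map_pow, hp]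
  have hαy : 0 < abv (α * y) := abv.pos (mul_ne_zero hα hy)
  set J : ℕ → ℂ := fun i => ∫ b in {b : F | abv b ≤ abv (y * p ^ i)}, ψ.mulShift (-α) b ∂μ
  have hJ : ∀ i ≤ N, J i = abv y * (q : ℂ) ^ i := fun i hi => by
    have hyp : y * p ^ i ≠ 0 := mul_ne_zero hy (pow_ne_zero i hp0)
    refine (hψ.setIntegral_mulShift_of_le_one hv hμ hyp ?_).trans ?_
    · rw [hαyp, ← hN]
      gcongr
      exact hq.le
    · rw [abv.map_mul, abv.map_pow, hp, ofReal_mul, ofReal_pow, ofReal_natCast]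
  have hJ₀ : ∀ i, N < i → J i = 0 := fun i hi => by
    refine hψ.setIntegral_mulShift_of_one_lt hv hμ ?_
    rw [hαyp, ← hN]
    gcongr
  rw [truncatedWhittaker_eq_sum hv hμ hψ hf hp hα hy fun _ => rfl,
    shellSum_eq_steinbergSum hq0 _ _ hJ hJ₀ hn, ← mul_assoc]
  congr 1
  nth_rw 2 [← cpow_one (abv y : ℂ)]
  rw [← cpow_add _ _ hy']
  ring_nf

theorem tendsto_truncatedWhittaker_zero (hv : IsNormalizedAbv abv q)
    (hμ : IsNormalizedHaar abv μ) (hψ : IsUnramified abv q ψ) (hf : IsSteinbergVector abv q s f)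
    (hαy : 1 < abv (α * y)) :
    Tendsto (fun n : ℕ => truncatedWhittaker abv μ f ψ α y ((q : ℝ) ^ n)) atTop (nhds 0) := by
  obtain ⟨p, hp, -⟩ := hψ.exists_abv_eq hv
  have hy : y ≠ 0 := right_ne_zero_of_mul (abv.pos_iff.mp (zero_lt_one.trans hαy))
  exact hv.tendsto_of_forall_lt (N := 0) hp hy fun n _ =>
    truncatedWhittaker_eq_zero hv hμ hψ hf hp hαy n

theorem tendsto_truncatedWhittaker_steinbergSum (hv : IsNormalizedAbv abv q)
    (hμ : IsNormalizedHaar abv μ) (hψ : IsUnramified abv q ψ) (hf : IsSteinbergVector abv q s f)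
    {N : ℕ} (hN : abv (α * y) * (q : ℝ) ^ N = 1) :
    Tendsto (fun n : ℕ => truncatedWhittaker abv μ f ψ α y ((q : ℝ) ^ n)) atTop
      (nhds ((abv y : ℂ) ^ (1 / 2 - s) *
        steinbergSum (q : ℂ)⁻¹ ((q : ℂ) ^ (-(2 * s))) N)) := by
  obtain ⟨p, hp, -⟩ := hψ.exists_abv_eq hv
  have hy : y ≠ 0 := right_ne_zero_of_mul (abv.ne_zero_iff.mp (left_ne_zero_of_mul_eq_one hN))
  exact hv.tendsto_of_forall_lt hp hy fun n hn =>
    truncatedWhittaker_eq_steinbergSum hv hμ hψ hf hp hN hn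

end Whittaker

/-- The local Whittaker function of the Steinberg vector `f_s^St` (the `Γ₀(𝔭)`-invariant
vector with `f(1) = 1`, `f(w) = -q⁻¹`) in the principal series `V_s` of `GL(2,F)`:
`(W_s^α f_s^St)(diag(y,1))
   = ((1-q^{-2s-1})|α|^{2s}|y|^{1/2+s} - (1-q^{2s-1})|y|^{1/2-s})/(1-q^{2s})`
if `v(αy) ≥ 0`, and `0` if `v(αy) < 0`; in particular at `s = 1/2` the value is
`-q⁻¹ |αy| (1+q⁻¹)`. -/
theorem stmt14 {F : Type*} [Field F] [MeasurableSpace F]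
    (abv : AbsoluteValue F ℝ) (q : ℕ) (hq : 1 < q)
    (hdisc : ∀ x : F, x ≠ 0 → ∃ m : ℤ, abv x = (q : ℝ) ^ m)
    (μ : Measure F)
    (hμ1 : μ {x : F | abv x ≤ 1} = 1)
    (hμinv : ∀ (t : F) (s : Set F), μ ((t + ·) ⁻¹' s) = μ s)
    (hmeas : ∀ (c : F) (r : ℝ), MeasurableSet {x : F | abv (x - c) ≤ r})
    (hcoset : ∀ n : ℕ, ∃ T : Finset F, T.card = q ^ n ∧
      ({x : F | abv x ≤ (q : ℝ) ^ n} = ⋃ c ∈ T, {x : F | abv (x - c) ≤ 1}) ∧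
      ∀ c ∈ T, ∀ c' ∈ T, c ≠ c' → 1 < abv (c - c'))
    (ψ : F → ℂ)
    (hψtriv : ∀ x : F, abv x ≤ 1 → ψ x = 1)
    (hψnt : ∃ x : F, abv x ≤ (q : ℝ) ∧ ψ x ≠ 1)
    (hψadd : ∀ x y : F, ψ (x + y) = ψ x * ψ y)
    (s : ℂ) (hs : (((q : ℝ)) : ℂ) ^ (2 * s) ≠ 1)
    (f : Matrix (Fin 2) (Fin 2) F → ℂ)
    (htrans : ∀ (a d : F), a ≠ 0 → d ≠ 0 → ∀ (b : F) (g : Matrix (Fin 2) (Fin 2) F),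
      f (!![a, b; 0, d] * g) = ((abv (a * d⁻¹) : ℝ) : ℂ) ^ (s + 1 / 2) * f g)
    (hΓ : ∀ (g κ : Matrix (Fin 2) (Fin 2) F),
      abv (κ 0 0) ≤ 1 → abv (κ 0 1) ≤ 1 → abv (κ 1 0) ≤ ((q : ℝ))⁻¹ → abv (κ 1 1) ≤ 1 →
      abv κ.det = 1 → f (g * κ) = f g)
    (hone : f 1 = 1) (hw : f !![0, -1; 1, 0] = -((q : ℂ))⁻¹)
    (α y : F) (hα : α ≠ 0) (hy : y ≠ 0) :
    (abv (α * y) ≤ 1 →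
      Tendsto (fun n : ℕ =>
          ∫ b in {b : F | abv b ≤ (q : ℝ) ^ n},
            f (!![0, -1; 1, 0] * !![1, b; 0, 1] * !![y, 0; 0, 1]) * ψ (-(α * b)) ∂μ)
        atTop
        (nhds (((1 - (((q : ℝ)) : ℂ) ^ (-(2 * s) - 1)) * ((abv α : ℝ) : ℂ) ^ (2 * s) *
              ((abv y : ℝ) : ℂ) ^ (1 / 2 + s) -
            (1 - (((q : ℝ)) : ℂ) ^ (2 * s - 1)) * ((abv y : ℝ) : ℂ) ^ (1 / 2 - s)) /
          (1 - (((q : ℝ)) : ℂ) ^ (2 * s))))) ∧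
    (1 < abv (α * y) →
      Tendsto (fun n : ℕ =>
          ∫ b in {b : F | abv b ≤ (q : ℝ) ^ n},
            f (!![0, -1; 1, 0] * !![1, b; 0, 1] * !![y, 0; 0, 1]) * ψ (-(α * b)) ∂μ)
        atTop (nhds 0)) ∧
    (s = 1 / 2 → abv (α * y) ≤ 1 →
      Tendsto (fun n : ℕ =>
          ∫ b in {b : F | abv b ≤ (q : ℝ) ^ n},
            f (!![0, -1; 1, 0] * !![1, b; 0, 1] * !![y, 0; 0, 1]) * ψ (-(α * b)) ∂μ)
        atTop
        (nhds (-((q : ℂ))⁻¹ * ((abv (α * y) : ℝ) : ℂ) * (1 + ((q : ℂ))⁻¹)))) := by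
  have hv : IsNormalizedAbv abv q := ⟨hq, hdisc, fun n =>
    let ⟨T, hcard, hball, hpair⟩ := hcoset n
    ⟨T, hcard, hball, fun c hc c' => hpair c hc c'⟩⟩
  have hμ : IsNormalizedHaar abv μ := ⟨hμ1, hμinv, hmeas⟩
  let χ : AddChar F ℂ := ⟨ψ, hψtriv 0 (by simp), hψadd⟩
  have hχ : IsUnramified abv q χ := ⟨hψtriv, hψnt⟩
  have hf : IsSteinbergVector abv q s f := ⟨htrans, hΓ, hone, hw⟩
  have exists_pow (h : abv (α * y) ≤ 1) : ∃ N : ℕ, abv (α * y) * (q : ℝ) ^ N = 1 := by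
    obtain ⟨N, hN⟩ := hv.exists_eq_mul_pow (mul_ne_zero hα hy) (h.trans_eq abv.map_one.symm)
    exact ⟨N, hN.symm.trans abv.map_one⟩
  refine ⟨fun h => ?_, tendsto_truncatedWhittaker_zero hv hμ hχ hf, ?_⟩
  · obtain ⟨N, hN⟩ := exists_pow h
    rw [ofReal_natCast] at hs ⊢
    rw [← ofReal_cpow_mul_steinbergSum (abv.pos hα) (abv.pos hy) hs (by rwa [← abv.map_mul])
      (by omega)]
    exact tendsto_truncatedWhittaker_steinbergSum hv hμ hχ hf hN
  · rintro rfl h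
    obtain ⟨N, hN⟩ := exists_pow h
    rw [← ofReal_cpow_mul_steinbergSum_one_half (r := abv y) hN]
    exact tendsto_truncatedWhittaker_steinbergSum hv hμ hχ hf hN
end

section
/- (Fourier expansion of $E_2$ from the adelic construction) For $z = x + iy$ in the upper half plane, $-\frac{3}{\pi y} + \frac{1}{2\zeta(2)}\sum_{c\in\mathbb{Z}}\sum_{d\in\mathbb{Z}, (c,d)\neq(0,0)}\frac{1}{(cz+d)^2} = 1 - \frac{3}{\pi y} - 24\sum_{n=1}^{\infty}\sigma(n)e^{2\pi i n z}$, where the inner sum over $d$ is performed first (Eisenstein summation), $\zeta(2)=\pi^2/6$ and $\sigma(n) = \sum_{d\mid n} d$. -/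
open Complex

/-!
Write `q = exp (2πiz)`. By the Lipschitz formula the row `∑_d (cz + d)⁻ᵏ` with `c ≥ 1` is a constant
multiple of `∑_{n ≥ 1} n ^ (k - 1) q ^ (cn)`. These double series converge absolutely because
`|q| < 1`, and the rows of `c` and `-c` agree up to the sign `(-1) ^ k`, so the sum of the rows is
unconditional even in weight `2`. It therefore equals the limit over symmetric ranges `|c| ≤ N`
that defines `E2`, whose `q`-expansion comes from collecting the terms with `cn` fixed.
-/

open UpperHalfPlane hiding I σ
open EisensteinSeries
open scoped Nat Real ArithmeticFunction.sigma

theorem eisSummand_neg (k : ℤ) (v : Fin 2 → ℤ) (τ : ℍ) :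
    eisSummand k (-v) τ = (-1) ^ k * eisSummand k v τ := by
  have hneg : ((-v) 0 : ℤ) * (τ : ℂ) + ((-v) 1 : ℤ) = -1 * (v 0 * τ + v 1) := by
    simp only [Pi.neg_apply]
    push_cast
    ring
  rw [eisSummand, eisSummand, hneg, mul_zpow, zpow_neg, ← inv_zpow, inv_neg_one]

theorem tsum_eisSummand_neg (k c : ℤ) (τ : ℍ) :
    ∑' d : ℤ, eisSummand k ![-c, d] τ = (-1) ^ k * ∑' d : ℤ, eisSummand k ![c, d] τ := by
  rw [← tsum_comp_neg, ← tsum_mul_left]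
  exact tsum_congr fun d ↦ by simpa using eisSummand_neg k ![c, d] τ

theorem tsum_eisSummand_eq_tsum_pnat_pow_mul_cexp_pow {k : ℕ} (hk : 2 ≤ k) (c : ℕ+) (τ : ℍ) :
    ∑' d : ℤ, eisSummand k ![c, d] τ = (-2 * π * I) ^ k / (k - 1)! *
      ∑' n : ℕ+, (n : ℂ) ^ (k - 1) * cexp (2 * π * I * τ) ^ (c * n : ℕ) := by
  have lipschitz := qExpansion_identity_pnat (k := k - 1) (by lia)
    ⟨c * τ, by simpa using τ.im_pos⟩
  rw [Nat.sub_add_cancel (by lia)] at lipschitz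
  calc ∑' d : ℤ, eisSummand k ![c, d] τ
      = ∑' d : ℤ, 1 / ((c * τ : ℂ) + d) ^ k := tsum_congr fun d ↦ by simp [eisSummand]
    _ = (-2 * π * I) ^ k / (k - 1)! *
        ∑' n : ℕ+, (n : ℂ) ^ (k - 1) * cexp (2 * π * I * (c * τ)) ^ (n : ℕ) := lipschitz
    _ = _ := by
      refine congrArg _ (tsum_congr fun n ↦ ?_)
      rw [pow_mul, ← Complex.exp_nat_mul _ c]
      ring_nf

theorem summable_tsum_eisSummand {k : ℕ} (hk : 2 ≤ k) (τ : ℍ) :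
    Summable fun c : ℤ ↦ ∑' d : ℤ, eisSummand k ![c, d] τ := by
  have hpnat : Summable fun c : ℕ+ ↦ ∑' d : ℤ, eisSummand k ![c, d] τ := by
    simp only [tsum_eisSummand_eq_tsum_pnat_pow_mul_cexp_pow hk]
    exact (summable_prod_mul_pow (k - 1) (norm_exp_two_pi_I_lt_one τ)).prod.mul_left _
  have hnat : Summable fun c : ℕ ↦ ∑' d : ℤ, eisSummand k ![c, d] τ :=
    (summable_pnat_iff_summable_nat (f := fun c ↦ ∑' d : ℤ, eisSummand k ![c, d] τ)).mp hpnat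
  refine .of_nat_of_neg hnat ?_
  simpa only [tsum_eisSummand_neg] using hnat.mul_left _

theorem E2_eq_tsum_tsum_zpow (τ : ℍ) :
    E2 τ = 1 / (2 * riemannZeta 2) * ∑' c : ℤ, ∑' d : ℤ, ((c : ℂ) * τ + d) ^ (-2 : ℤ) :=
  congrArg (1 / (2 * riemannZeta 2) * ·)
    (tsum_eq_of_summable_unconditional (summable_tsum_eisSummand le_rfl τ))

theorem tsum_pnat_sigma_mul_cexp_pow (k : ℕ) (z : ℂ) :
    ∑' n : ℕ+, σ k n * cexp (2 * π * I * z) ^ (n : ℕ) =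
      ∑' n : ℕ, (∑ d ∈ (n + 1).divisors, (d : ℂ) ^ k) * cexp (2 * π * I * (n + 1) * z) := by
  rw [tsum_pnat_eq_tsum_succ (f := fun n ↦ (σ k n : ℂ) * cexp (2 * π * I * z) ^ n)]
  refine tsum_congr fun n ↦ ?_
  rw [ArithmeticFunction.sigma_apply, ← Complex.exp_nat_mul]
  push_cast
  ring_nf

/-- The Fourier expansion of the weight-2 Eisenstein series `E₂` (with Eisenstein summation,
i.e. the inner sum over `d` performed first):
`-3/(πy) + (1/(2ζ(2))) ∑_{c∈ℤ} ∑_{d∈ℤ} (cz+d)^{-2} = 1 - 3/(πy) - 24 ∑_{n≥1} σ(n) e^{2πinz}`.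
(In the term `c = d = 0` the convention `(0:ℂ)⁻¹ = 0` realises the omission of that term.) -/
theorem stmt19 (z : ℂ) (hz : 0 < z.im) :
    -3 / (Real.pi * z.im) + 1 / (2 * riemannZeta 2) *
        ∑' c : ℤ, ∑' d : ℤ, ((c : ℂ) * z + (d : ℂ)) ^ (-2 : ℤ) =
      1 - 3 / (Real.pi * z.im) -
        24 * ∑' n : ℕ, (∑ d ∈ (n + 1).divisors, (d : ℂ)) *
          Complex.exp (2 * Real.pi * I * ((n : ℂ) + 1) * z) := by
  have hqExpansion := E2_eq_tsum_cexp ⟨z, hz⟩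
  rw [E2_eq_tsum_tsum_zpow, tsum_pnat_sigma_mul_cexp_pow] at hqExpansion
  simp only [pow_one] at hqExpansion
  rw [hqExpansion]
  ring
end
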